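/- Let S = k[x_0,…,x_n, y_0,…,y_m] be a bigraded polynomial ring and let V be a complete intersection scheme of points in P^n × P^m defined by I = (f_1,…,f_{n+m}) with deg(f_i) = (d,e) for all i. If μ ∈ Z² does not belong to Γ_1, then HF_{S/I}(μ) = HF_V(μ). -/

import Mathlib

open MvPolynomial Pointwise

noncomputable section

/-- The bigraded polynomial ring `S = k[x_0,…,x_n,y_0,…,y_m]`. -/
abbrev PolyS (k : Type) [Field k] (n m : ℕ) := MvPolynomial (Fin (n+1) ⊕ Fin (m+1)) k

/-- The bigrading weights: `deg x_i = (1,0)`, `deg y_j = (0,1)`. -/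
def wt (n m : ℕ) : (Fin (n+1) ⊕ Fin (m+1)) → ℤ × ℤ :=
  Sum.elim (fun _ => (1,0)) (fun _ => (0,1))

/-- The bigraded piece of `S` in bidegree `γ`. -/
def grad (k : Type) [Field k] (n m : ℕ) (γ : ℤ × ℤ) : Submodule k (PolyS k n m) :=
  weightedHomogeneousSubmodule k (wt n m) γ

/-- `B₁ = (x_0,…,x_n)`. -/
def Bone (k : Type) [Field k] (n m : ℕ) : Ideal (PolyS k n m) :=
  Ideal.span (Set.range fun i => X (Sum.inl i))

/-- `B₂ = (y_0,…,y_m)`. -/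
def Btwo (k : Type) [Field k] (n m : ℕ) : Ideal (PolyS k n m) :=
  Ideal.span (Set.range fun j => X (Sum.inr j))

/-- `B = B₁ ⬝ B₂`, the irrelevant ideal of `ℙⁿ × ℙᵐ`. -/
def Birr (k : Type) [Field k] (n m : ℕ) : Ideal (PolyS k n m) := Bone k n m * Btwo k n m

/-- The saturation `I : C^∞` of an ideal. -/
def satIdeal {k : Type} [Field k] {n m : ℕ} (I C : Ideal (PolyS k n m)) :
    Ideal (PolyS k n m) :=
  ⨆ t : ℕ, Submodule.colon I (C ^ t)

/-- The bidegree-`γ` piece of `S ⧸ I`, as a `k`-subspace. -/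
def quotPiece (k : Type) [Field k] (n m : ℕ) (I : Ideal (PolyS k n m)) (γ : ℤ × ℤ) :
    Submodule k ((PolyS k n m) ⧸ I) :=
  (grad k n m γ).map (Ideal.Quotient.mkₐ k I).toLinearMap

/-- The bigraded Hilbert function of `S ⧸ I`. -/
def HFq (k : Type) [Field k] (n m : ℕ) (I : Ideal (PolyS k n m)) (γ : ℤ × ℤ) : ℕ :=
  Module.finrank k (quotPiece k n m I γ)

/-- The bigraded Hilbert function of the subscheme of `ℙⁿ × ℙᵐ` defined by `I`, i.e. the
Hilbert function of `S ⧸ (I : B^∞)`. -/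
def HFV (k : Type) [Field k] (n m : ℕ) (I : Ideal (PolyS k n m)) (γ : ℤ × ℤ) : ℕ :=
  HFq k n m (satIdeal I (Birr k n m)) γ

/-- `codim V = r`, encoded as: the cone over `V` (i.e. `Spec` of `S` modulo the saturation
of `I`) has Krull dimension `n + m + 2 - r`. -/
def CodimEq (k : Type) [Field k] (n m : ℕ) (I : Ideal (PolyS k n m)) (r : ℕ) : Prop :=
  ringKrullDim ((PolyS k n m) ⧸ satIdeal I (Birr k n m)) = ((n + m + 2 - r : ℕ) : WithBot ℕ∞)

/-- The Hilbert function of `S` itself. -/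
def HFS (k : Type) [Field k] (n m : ℕ) (γ : ℤ × ℤ) : ℕ :=
  Module.finrank k (grad k n m γ)

/-- Integer binomial coefficient `C(x,t)`, with the Hilbert-function convention that it
vanishes for `x < 0`. -/
def ibin (x : ℤ) (t : ℕ) : ℤ := if x < 0 then 0 else (x.toNat.choose t : ℤ)

/-- `χ(a,b) = Σᵢ (−1)^i C(n+m,i) C(n+a−id,n) C(m+b−ie,m)`. -/
def chiCI (n m d e : ℕ) (γ : ℤ × ℤ) : ℤ :=
  ∑ i ∈ Finset.range (n + m + 1),
    (-1) ^ i * (Nat.choose (n + m) i : ℤ) *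
      ibin ((n : ℤ) + γ.1 - i * d) n * ibin ((m : ℤ) + γ.2 - i * e) m

/-- `v_i = i·(d,e) − (n+1,0)`. -/
def vpt (n d e : ℕ) (i : ℤ) : ℤ × ℤ := (i * d - (n + 1), i * e)

/-- `w_i = i·(d,e) − (0,m+1)`. -/
def wpt (m d e : ℕ) (i : ℤ) : ℤ × ℤ := (i * d, i * e - (m + 1))

/-- `σ = (n+m)·(d,e) − (n+1,m+1)`. -/
def sigmaPt (n m d e : ℕ) : ℤ × ℤ :=
  ((n + m : ℤ) * d - (n + 1), (n + m : ℤ) * e - (m + 1))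

/-- `Γ_i = Supp(H^{n+1}_{B₁}(K_{n+i}(f,S))) ∪ Supp(H^{m+1}_{B₂}(K_{m+i}(f,S)))`, computed
explicitly: for `0 ≤ n+i ≤ n+m` the first support is `v_{n+i} + (−ℕ,ℕ)`, and for
`0 ≤ m+i ≤ n+m` the second support is `w_{m+i} + (ℕ,−ℕ)`; otherwise the Koszul terms
vanish. -/
def GammaSet (n m d e : ℕ) (i : ℤ) : Set (ℤ × ℤ) :=
  {γ | (0 ≤ (n : ℤ) + i ∧ (n : ℤ) + i ≤ (n : ℤ) + m ∧
          γ.1 ≤ ((n : ℤ) + i) * d - ((n : ℤ) + 1) ∧ ((n : ℤ) + i) * e ≤ γ.2) ∨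
       (0 ≤ (m : ℤ) + i ∧ (m : ℤ) + i ≤ (n : ℤ) + m ∧
          ((m : ℤ) + i) * d ≤ γ.1 ∧ γ.2 ≤ ((m : ℤ) + i) * e - ((m : ℤ) + 1))}

/-- `V = Proj(S/I)` is a complete intersection scheme of points in `ℙⁿ × ℙᵐ` defined by
`n+m` forms of bidegree `(d,e)`: `I` is generated by the `f i`, each `f i` is bihomogeneous
of bidegree `(d,e)`, and `V` is zero-dimensional (codimension `n+m`). -/
def IsCIPoints (k : Type) [Field k] (n m d e : ℕ) (f : Fin (n + m) → PolyS k n m)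
    (I : Ideal (PolyS k n m)) : Prop :=
  (∀ i, f i ∈ grad k n m ((d : ℤ), (e : ℤ))) ∧ I = Ideal.span (Set.range f) ∧
    CodimEq k n m I (n + m)

set_option linter.all false
set_option linter.unusedSectionVars false
set_option linter.unusedSimpArgs false

section CAR

/-- the sign of inserting `i` into `T`, relative to a ranking `r` -/
def sg {ι : Type*} (r : ι → ℕ) (i : ι) (T : Finset ι) : ℤ := (-1) ^ (T.filter (fun j => r j < r i)).card

variable {ι : Type*} [DecidableEq ι] (r : ι → ℕ)

lemma sg_mul_self (i : ι) (T : Finset ι) : sg r i T * sg r i T = 1 := by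
  unfold sg; rw [← mul_pow]; simp

lemma sg_insert {i j : ι} {T : Finset ι} (hj : j ∉ T) :
    sg r i (insert j T) = (if r j < r i then -1 else 1) * sg r i T := by
  unfold sg
  rw [Finset.filter_insert]
  split_ifs with h
  · rw [Finset.card_insert_of_notMem (by simp [hj])]; ring
  · ring

variable {M : Type*} [AddCommGroup M] 

/-- creation operator -/
def cre (i : ι) : (Finset ι → M) →+ (Finset ι → M) where
  toFun z T := if i ∈ T then sg r i (T.erase i) • z (T.erase i) else 0
  map_zero' := by ext T; simp
  map_add' x y := by ext T; simp only [Pi.add_apply]; split_ifs <;> simp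

/-- annihilation operator -/
def ann (i : ι) : (Finset ι → M) →+ (Finset ι → M) where
  toFun z T := if i ∈ T then 0 else sg r i T • z (insert i T)
  map_zero' := by ext T; simp
  map_add' x y := by ext T; simp only [Pi.add_apply]; split_ifs <;> simp

lemma cre_apply (i : ι) (z : Finset ι → M) (T : Finset ι) :
    cre r i z T = if i ∈ T then sg r i (T.erase i) • z (T.erase i) else 0 := rfl

lemma ann_apply (i : ι) (z : Finset ι → M) (T : Finset ι) :
    ann r i z T = if i ∈ T then 0 else sg r i T • z (insert i T) := rfl

lemma cre_insert {i : ι} {T : Finset ι} (h : i ∉ T) (z : Finset ι → M) :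
    cre r i z (insert i T) = sg r i T • z T := by
  rw [cre_apply, if_pos (Finset.mem_insert_self _ _), Finset.erase_insert h]

lemma cre_notMem {i : ι} {T : Finset ι} (h : i ∉ T) (z : Finset ι → M) :
    cre r i z T = 0 := if_neg h

lemma ann_notMem {i : ι} {T : Finset ι} (h : i ∉ T) (z : Finset ι → M) :
    ann r i z T = sg r i T • z (insert i T) := if_neg h

lemma ann_mem {i : ι} {T : Finset ι} (h : i ∈ T) (z : Finset ι → M) :
    ann r i z T = 0 := if_pos h

variable {r}

lemma ite_flip (hr : Function.Injective r) {i j : ι} (h : i ≠ j) :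
    (if r j < r i then (-1 : ℤ) else 1) = - (if r i < r j then -1 else 1) := by
  have := hr.ne h
  split_ifs <;> first | omega | simp

lemma exists_insert {i : ι} {T : Finset ι} (h : i ∈ T) : ∃ T', i ∉ T' ∧ T = insert i T' :=
  ⟨T.erase i, by simp, (Finset.insert_erase h).symm⟩

lemma ann_ann (hr : Function.Injective r) (i j : ι) (z : Finset ι → M) :
    ann r i (ann r j z) = - ann r j (ann r i z) := by
  ext T
  rw [Pi.neg_apply]
  by_cases hi : i ∈ T
  · rw [ann_mem r hi]
    by_cases hj : j ∈ T
    · rw [ann_mem r hj]; simp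
    · rw [ann_notMem r hj, ann_mem r (Finset.mem_insert_of_mem hi)]; simp
  by_cases hj : j ∈ T
  · rw [ann_notMem r hi, ann_mem r hj, ann_mem r (Finset.mem_insert_of_mem hj)]; simp
  rw [ann_notMem r hi, ann_notMem r hj]
  by_cases hij : i = j
  · subst hij
    rw [ann_mem r (Finset.mem_insert_self _ _)]; simp
  · rw [ann_notMem r (by simp [hj, Ne.symm hij]), ann_notMem r (by simp [hi, hij]),
      sg_insert r hi, sg_insert r hj, Finset.insert_comm, ite_flip hr hij]
    simp only [smul_smul, ← neg_smul]
    congr 1; ring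

lemma cre_cre (hr : Function.Injective r) (i j : ι) (z : Finset ι → M) :
    cre r i (cre r j z) = - cre r j (cre r i z) := by
  ext T
  rw [Pi.neg_apply]
  by_cases hi : i ∈ T
  swap
  · rw [cre_notMem r hi]
    by_cases hj : j ∈ T
    · rw [cre_apply, if_pos hj, cre_notMem r (by simp [hi])]; simp
    · rw [cre_notMem r hj]; simp
  by_cases hj : j ∈ T
  swap
  · rw [cre_notMem r hj, cre_apply, if_pos hi, cre_notMem r (by simp [hj])]; simp
  obtain ⟨T, hi', rfl⟩ := exists_insert hi
  by_cases hij : i = j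
  · subst hij
    rw [cre_insert r hi', cre_notMem r hi']; simp
  rw [Finset.mem_insert, or_iff_right (Ne.symm hij)] at hj
  obtain ⟨T, hj', rfl⟩ := exists_insert hj
  rw [Finset.mem_insert, not_or] at hi'
  rw [cre_insert r (by simp [hi', hij]), cre_insert r hj', Finset.insert_comm,
    cre_insert r (by simp [hj', Ne.symm hij]), cre_insert r hi'.2, sg_insert r hi'.2,
    sg_insert r hj', ite_flip hr hij]
  simp only [smul_smul, ← neg_smul]
  congr 1; ring

lemma ann_cre_self (i : ι) (z : Finset ι → M) :
    ann r i (cre r i z) + cre r i (ann r i z) = z := by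
  ext T
  rw [Pi.add_apply]
  by_cases hi : i ∈ T
  · obtain ⟨T, hi', rfl⟩ := exists_insert hi
    rw [ann_mem r hi, cre_insert r hi', ann_notMem r hi', smul_smul, sg_mul_self]; simp
  · rw [cre_notMem r hi, ann_notMem r hi, cre_insert r hi, smul_smul, sg_mul_self]; simp

lemma ann_cre_ne (hr : Function.Injective r) {i j : ι} (hij : i ≠ j) (z : Finset ι → M) :
    ann r i (cre r j z) + cre r j (ann r i z) = 0 := by
  ext T
  rw [Pi.add_apply]
  by_cases hj : j ∈ T
  swap
  · rw [cre_notMem r hj]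
    by_cases hi : i ∈ T
    · rw [ann_mem r hi]; simp
    · rw [ann_notMem r hi, cre_notMem r (by simp [hj, Ne.symm hij])]; simp
  obtain ⟨T, hj', rfl⟩ := exists_insert hj
  rw [cre_insert r hj']
  by_cases hi : i ∈ T
  · rw [ann_mem r hi, ann_mem r (by simp [hi])]; simp
  rw [ann_notMem r (by simp [hi, hij]), ann_notMem r hi, Finset.insert_comm, 
    cre_insert r (by simp [hj', Ne.symm hij]), sg_insert r hi, sg_insert r hj', ite_flip hr hij]
  simp only [smul_smul, ← add_smul]
  rw [Pi.zero_apply]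
  convert zero_smul ℤ _
  split_ifs <;> ring

/-- commutation with additive maps -/
lemma cre_comp {M' : Type*} [AddCommGroup M'] (g : M →+ M') (i : ι) (z : Finset ι → M) :
    cre r i (fun T => g (z T)) = fun T => g (cre r i z T) := by
  ext T; simp only [cre_apply]; split_ifs <;> simp

lemma ann_comp {M' : Type*} [AddCommGroup M'] (g : M →+ M') (i : ι) (z : Finset ι → M) :
    ann r i (fun T => g (z T)) = fun T => g (ann r i z T) := by
  ext T; simp only [ann_apply]; split_ifs <;> simp

variable (r)

/-- the Čech type differential in the directions `A` -/
def dA (A : Finset ι) : (Finset ι → M) →+ (Finset ι → M) := ∑ i ∈ A, cre r i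

variable {r}

lemma dA_apply (A : Finset ι) (z : Finset ι → M) : dA r A z = ∑ i ∈ A, cre r i z := by
  simp [dA]

lemma dA_apply2 (A : Finset ι) (z : Finset ι → M) (T) :
    dA r A z T = ∑ i ∈ A, cre r i z T := by
  simp [dA]

lemma dA_dA (hr : Function.Injective r) (A B : Finset ι) (z : Finset ι → M) :
    dA r A (dA r B z) = - dA r B (dA r A z) := by
  simp only [dA_apply, map_sum]
  rw [Finset.sum_comm, ← Finset.sum_neg_distrib]
  refine Finset.sum_congr rfl fun i _ => ?_
  rw [← Finset.sum_neg_distrib]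
  exact Finset.sum_congr rfl fun j _ => cre_cre hr _ _ _

lemma dA_sq (hr : Function.Injective r) (A : Finset ι) (z : Finset ι → M) :
    dA r A (dA r A z) = 0 := by
  have hc : ∀ i, cre r i (cre r i z) = 0 := by
    intro i; ext T
    by_cases hi : i ∈ T
    · obtain ⟨T, hi', rfl⟩ := exists_insert hi
      rw [cre_insert r hi', cre_notMem r hi']; simp
    · rw [cre_notMem r hi]; rfl
  induction A using Finset.induction_on with
  | empty => simp [dA_apply]
  | insert a A ha ih =>
    have : ∀ y : Finset ι → M, dA r (insert a A) y = cre r a y + dA r A y := by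
      intro y; rw [dA_apply, Finset.sum_insert ha, dA_apply]
    rw [this, this, map_add, map_add, ih, hc]
    have h2 : dA r A (cre r a z) = - cre r a (dA r A z) := by
      have := dA_dA hr A {a} z
      simpa [dA_apply] using this
    rw [h2]; abel

lemma ann_dA (hr : Function.Injective r) {A : Finset ι} {i : ι} (hi : i ∈ A) (z : Finset ι → M) :
    ann r i (dA r A z) + dA r A (ann r i z) = z := by
  simp only [dA_apply, map_sum]
  rw [← Finset.sum_add_distrib, Finset.sum_eq_single i]
  · exact ann_cre_self i z
  · intro j _ hj; exact ann_cre_ne hr (Ne.symm hj) z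
  · intro h; exact absurd hi h

lemma dA_comp {M' : Type*} [AddCommGroup M'] (g : M →+ M') (A : Finset ι) (z : Finset ι → M) :
    dA r A (fun T => g (z T)) = fun T => g (dA r A z T) := by
  ext T; simp only [dA_apply2, cre_comp, map_sum]

lemma dA_ne_zero {A : Finset ι} {z : Finset ι → M} {T} (h : dA r A z T ≠ 0) :
    ∃ i ∈ A, ∃ T', i ∉ T' ∧ T = insert i T' ∧ z T' ≠ 0 := by
  rw [dA_apply2] at h
  obtain ⟨i, hi, h⟩ := Finset.exists_ne_zero_of_sum_ne_zero h
  rw [cre_apply] at h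
  split_ifs at h with hT
  · exact ⟨i, hi, T.erase i, by simp, (Finset.insert_erase hT).symm, right_ne_zero_of_smul h⟩
  · exact absurd rfl h

lemma ann_ne_zero {i : ι} {z : Finset ι → M} {T} (h : ann r i z T ≠ 0) :
    i ∉ T ∧ z (insert i T) ≠ 0 := by
  rw [ann_apply] at h
  split_ifs at h with hT
  · exact absurd rfl h
  · exact ⟨hT, right_ne_zero_of_smul h⟩

end CAR

section Koszul

variable {ι : Type*} [DecidableEq ι] [Fintype ι] (r : ι → ℕ) {R : Type*} [CommRing R]
  (f : ι → R) {M : Type*} [AddCommGroup M] [Module R M]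

/-- Koszul differential -/
def kos : (Finset ι → M) →+ (Finset ι → M) :=
  ∑ i, (DistribSMul.toAddMonoidHom (Finset ι → M) (f i)).comp (ann r i)

/-- Koszul homotopy -/
def hkos (a : ι → R) : (Finset ι → M) →+ (Finset ι → M) :=
  ∑ i, (DistribSMul.toAddMonoidHom (Finset ι → M) (a i)).comp (cre r i)

variable {r f}

lemma kos_apply (z : Finset ι → M) : kos r f z = ∑ i, f i • ann r i z := by
  simp [kos]

lemma kos_apply2 (z : Finset ι → M) (T) : kos r f z T = ∑ i, f i • ann r i z T := by
  simp [kos]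

lemma hkos_apply (a : ι → R) (z : Finset ι → M) : hkos r a z = ∑ i, a i • cre r i z := by
  simp [hkos]

lemma hkos_apply2 (a : ι → R) (z : Finset ι → M) (T) : hkos r a z T = ∑ i, a i • cre r i z T := by
  simp [hkos]

lemma ann_smul (i : ι) (a : R) (z : Finset ι → M) : ann r i (a • z) = a • ann r i z :=
  ann_comp (DistribSMul.toAddMonoidHom M a) i z

lemma cre_smul (i : ι) (a : R) (z : Finset ι → M) : cre r i (a • z) = a • cre r i z :=
  cre_comp (DistribSMul.toAddMonoidHom M a) i z

lemma kos_smul (a : R) (z : Finset ι → M) : kos r f (a • z) = a • kos r f z := by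
  simp only [kos_apply, ann_smul, Finset.smul_sum, smul_comm a]

lemma kos_hkos (hr : Function.Injective r) (a : ι → R) (z : Finset ι → M) :
    kos r f (hkos r a z) + hkos r a (kos r f z) = (∑ i, a i * f i) • z := by
  simp only [kos_apply, hkos_apply, map_sum, ann_smul, cre_smul, Finset.smul_sum]
  conv_lhs => rw [Finset.sum_comm]; 
  rw [← Finset.sum_add_distrib, Finset.sum_smul]
  refine Finset.sum_congr rfl fun i _ => ?_
  rw [← Finset.sum_add_distrib, Finset.sum_eq_single i]
  · rw [smul_comm (f i), ← smul_add, ← smul_add, ann_cre_self, smul_smul]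
  · intro j _ hj
    rw [smul_comm (f i), ← smul_add, ← smul_add, ann_cre_ne hr (Ne.symm hj)]; simp
  · simp

lemma kos_sq (hr : Function.Injective r) (z : Finset ι → M) : kos r f (kos r f z) = 0 := by
  have hc : ∀ i, ann r i (ann r i z) = 0 := by
    intro i; ext T
    by_cases hi : i ∈ T
    · rw [ann_mem r hi]; rfl
    · rw [ann_notMem r hi, ann_mem r (by simp)]; simp
  have key : ∀ A : Finset ι, ∑ i ∈ A, ∑ j ∈ A, f i • f j • ann r i (ann r j z) = 0 := by
    intro A
    induction A using Finset.induction_on with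
    | empty => simp
    | insert a A ha ih =>
      simp only [Finset.sum_insert ha, Finset.sum_add_distrib, ih, hc]
      rw [smul_zero, smul_zero, zero_add, add_zero, ← Finset.sum_add_distrib]
      refine Finset.sum_eq_zero fun i _ => ?_
      rw [ann_ann hr a i, smul_comm]; simp
  simp only [kos_apply, map_sum, ann_smul]
  rw [Finset.sum_comm]
  exact key Finset.univ

lemma kos_comp {R' M' : Type*} [CommRing R'] [AddCommGroup M'] [Module R' M'] (φ : R → R') (g : M →+ M')
    (hg : ∀ i (x : M), g (f i • x) = φ (f i) • g x) (z : Finset ι → M) :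
    kos r (fun i => φ (f i)) (fun T => g (z T)) = fun T => g (kos r f z T) := by
  ext T; simp only [kos_apply2, ann_comp, map_sum, hg]

lemma kos_ne_zero {z : Finset ι → M} {T} (h : kos r f z T ≠ 0) :
    ∃ i, i ∉ T ∧ f i • z (insert i T) ≠ 0 := by
  rw [kos_apply2] at h
  obtain ⟨i, hi, h⟩ := Finset.exists_ne_zero_of_sum_ne_zero h
  rw [ann_apply] at h
  split_ifs at h with hT
  · simp at h
  · rw [smul_comm] at h
    exact ⟨i, hT, right_ne_zero_of_smul h⟩

/-- concentrated in degree `j` -/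
def Conc (j : ℕ) (z : Finset ι → M) : Prop := ∀ T, z T ≠ 0 → T.card = j

lemma Conc.hkos {j : ℕ} {z : Finset ι → M} (h : Conc j z) (a : ι → R) : Conc (j+1) (hkos r a z) := by
  intro T hT
  rw [hkos_apply2] at hT
  obtain ⟨i, hi, hT⟩ := Finset.exists_ne_zero_of_sum_ne_zero hT
  rw [cre_apply] at hT
  split_ifs at hT with hi
  · have := h _ (right_ne_zero_of_smul (right_ne_zero_of_smul hT))
    rw [← Finset.insert_erase hi, Finset.card_insert_of_notMem (by simp), this]
  · simp at hT

/-- Truncation to degree `j` -/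
def trunc (j : ℕ) (z : Finset ι → M) : Finset ι → M := fun T => if T.card = j then z T else 0

lemma conc_trunc (j : ℕ) (z : Finset ι → M) : Conc j (trunc j z) := by
  intro T hT; by_contra h; exact hT (if_neg h)

lemma trunc_eq {j : ℕ} {z : Finset ι → M} (h : Conc j z) : trunc j z = z := by
  ext T; unfold trunc; split_ifs with hT
  · rfl
  · by_contra h'; exact hT (h T (Ne.symm h'))

lemma kos_trunc (j : ℕ) (z : Finset ι → M) : kos r f (trunc (j+1) z) = trunc j (kos r f z) := by
  ext T
  simp only [kos_apply2, trunc, ann_apply]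
  split_ifs with h
  · refine Finset.sum_congr rfl fun i _ => ?_
    split_ifs with hi h2
    · rfl
    · rfl
    · rw [Finset.card_insert_of_notMem hi] at h2; omega
  · refine Finset.sum_eq_zero fun i _ => ?_
    split_ifs with hi h2
    · simp
    · rw [Finset.card_insert_of_notMem hi] at h2; omega
    · simp

end Koszul

section Depth

open RingTheory.Sequence

lemma exists_smul_of_mk_eq {R M : Type*} [CommRing R] [AddCommGroup M] [Module R M] (r : R) (x y : M)
    (h : (Submodule.Quotient.mk x : QuotSMulTop r M) = Submodule.Quotient.mk y) :
    ∃ v : M, x - y = r • v := by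
  rw [Submodule.Quotient.eq] at h
  obtain ⟨v, _, hv⟩ := (Submodule.mem_smul_pointwise_iff_exists _ _ _).1 h
  exact ⟨v, hv.symm⟩

lemma kos_depth {R : Type*} [CommRing R] {N : ℕ} (f : Fin N → R) (b : R) :
    ∀ (rs : List R), (∀ x ∈ rs, ∃ t : ℕ, b ^ t * x ∈ Ideal.span (Set.range f)) →
    ∀ (M : Type _) [AddCommGroup M] [Module R M], IsWeaklyRegular M rs →
    ∀ j : ℕ, N < j + rs.length → ∀ z : Finset (Fin N) → M, Conc j z →
      kos Fin.val f z = 0 → ∃ (s : ℕ) (w : Finset (Fin N) → M), Conc (j+1) w ∧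
        kos Fin.val f w = b ^ s • z := by
  intro rs
  induction rs with
  | nil =>
    intro _ M _ _ _ j hj z hz _
    refine ⟨0, 0, fun T hT => absurd rfl hT, ?_⟩
    have : z = 0 := by
      ext T
      by_contra h
      have h1 := hz T h
      have h2 := T.card_le_univ
      simp at h2 hj
      omega
    simp [this]
  | cons p rs ih =>
    intro hb M _ _ hreg j hj z hz hdz
    obtain ⟨t, ht⟩ := hb p (by simp)
    obtain ⟨a, ha⟩ := (Ideal.mem_span_range_iff_exists_fun).1 ht
    rw [isWeaklyRegular_cons_iff] at hreg
    obtain ⟨hp, hreg⟩ := hreg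
    set w0 := hkos Fin.val a z with hw0
    have hw0c : Conc (j+1) w0 := hz.hkos a
    have hdw0 : kos Fin.val f w0 = (b ^ t * p) • z := by
      have := kos_hkos (f := f) Fin.val_injective a z
      rw [hdz, map_zero, add_zero, ha] at this
      exact this
    let π : M →+ QuotSMulTop p M := (Submodule.mkQ (p • (⊤ : Submodule R M))).toAddMonoidHom
    have hπ : ∀ (c : R) x, π (c • x) = c • π x := fun c x => map_smul (Submodule.mkQ _) c x
    have hπs : Function.Surjective π := Submodule.mkQ_surjective _
    have hπp : ∀ x, π (p • x) = 0 := by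
      intro x
      refine (Submodule.Quotient.mk_eq_zero _).2 ?_
      exact Submodule.smul_mem_pointwise_smul _ _ _ trivial
    have hkπ : ∀ z : Finset (Fin N) → M, kos Fin.val f (fun T => π (z T)) = fun T => π (kos Fin.val f z T) :=
      fun z => kos_comp (f := f) id π (fun i x => hπ _ _) z
    obtain ⟨s, u', hu'c, hu'⟩ := ih (fun x hx => hb x (by simp [hx])) (QuotSMulTop p M) hreg (j+1)
      (by simp at hj; omega) (fun T => π (w0 T))
      (fun T hT => hw0c T (fun h => hT (by simp [h]))) (by
        rw [hkπ, hdw0]; ext T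
        simp only [Pi.smul_apply, mul_comm _ p, mul_smul, hπp]; rfl)
    choose u hu using fun T => hπs (u' T)
    have hu2 : (fun T => π (u T)) = u' := funext hu
    rw [← hu2, hkπ] at hu'
    have hex : ∀ T, ∃ v : M, kos Fin.val f u T - b ^ s • w0 T = p • v := by
      intro T
      apply exists_smul_of_mk_eq
      have := congrFun hu' T
      simp only [Pi.smul_apply, ← hπ] at this
      exact this
    choose v hv using hex
    have hv' : kos Fin.val f u - b ^ s • w0 = p • v := funext hv
    have h3 : p • (kos Fin.val f v) = p • (- (b ^ (s + t)) • z) := by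
      rw [← kos_smul, ← hv', map_sub, kos_sq Fin.val_injective, kos_smul, hdw0]
      rw [zero_sub, smul_smul, smul_smul, ← neg_smul]
      congr 1; ring
    have h4 : kos Fin.val f v = - (b ^ (s + t)) • z := by
      ext T; exact hp (congrFun h3 T)
    refine ⟨s + t, trunc (j+1) (-v), conc_trunc _ _, ?_⟩
    rw [kos_trunc, map_neg, h4, neg_smul, neg_neg]
    apply trunc_eq
    intro T hT
    exact hz T (right_ne_zero_of_smul (show b ^ (s + t) • z T ≠ 0 from hT))

end Depth

section DimThree

lemma dim_ge_of_integral_inj {R D : Type} [CommRing R] [IsDomain R] [CommRing D] [IsDomain D] [Algebra R D]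
    [Algebra.IsIntegral R D] (hi : Function.Injective (algebraMap R D)) :
    ringKrullDim R ≤ ringKrullDim D := by
  unfold ringKrullDim Order.krullDim
  refine iSup_le fun l => ?_
  obtain ⟨P0, hP0, hP0'⟩ : ∃ P : Ideal D, P.IsPrime ∧ P.LiesOver l.head.asIdeal := by
    have h0 : (⊥ : Ideal D).comap (algebraMap R D) ≤ l.head.asIdeal := by
      rw [Ideal.comap_bot_of_injective _ hi]; exact bot_le
    obtain ⟨Q, _, hQ, hQq⟩ := Ideal.exists_ideal_over_prime_of_isIntegral_of_isPrime l.head.asIdeal (⊥ : Ideal D) h0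
    exact ⟨Q, hQ, ⟨hQq.symm⟩⟩
  obtain ⟨L', hL, _⟩ := Ideal.exists_ltSeries_of_hasGoingUp l P0
  rw [← hL]
  exact le_iSup (fun p : LTSeries (PrimeSpectrum D) => (p.length : WithBot ℕ∞)) L'

lemma not_algInd_dom {k D : Type} [Field k] [CommRing D] [IsDomain D] [Algebra k D] [Algebra.FiniteType k D]
    (h : ringKrullDim D ≤ 2) (a : Fin 3 → D) : ¬ AlgebraicIndependent k a := by
  intro ha
  obtain ⟨s, g, hg, hinteg⟩ := exists_integral_inj_algHom_of_fg k D
  algebraize [g.toRingHom]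
  have hi : Function.Injective (algebraMap (MvPolynomial (Fin s) k) D) := hg
  haveI : IsScalarTower k (MvPolynomial (Fin s) k) D := IsScalarTower.of_algebraMap_eq' g.comp_algebraMap.symm
  haveI : Algebra.IsIntegral (MvPolynomial (Fin s) k) D := ⟨hinteg⟩
  haveI : FaithfulSMul (MvPolynomial (Fin s) k) D := (faithfulSMul_iff_algebraMap_injective _ _).2 hi
  have h1 := dim_ge_of_integral_inj hi
  rw [MvPolynomial.ringKrullDim_of_isNoetherianRing, ringKrullDim_eq_zero_of_field] at h1
  have h2 : s ≤ 2 := by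
    have := h1.trans h
    simp at this
    exact_mod_cast this
  have h3 := trdeg_add_eq k (MvPolynomial (Fin s) k) (A := D)
  rw [MvPolynomial.trdeg_of_isDomain, trdeg_eq_zero] at h3
  have h4 := ha.cardinalMk_le_trdeg
  rw [← h3] at h4
  simp at h4
  have : 3 ≤ s := by exact_mod_cast h4
  omega

lemma not_algInd {k A : Type} [Field k] [CommRing A] [Algebra k A] [Algebra.FiniteType k A]
    (h : ringKrullDim A ≤ 2) (a : Fin 3 → A) : ¬ AlgebraicIndependent k a := by
  intro ha
  have hinj : Function.Injective (aeval a : MvPolynomial (Fin 3) k →ₐ[k] A).toRingHom := ha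
  obtain ⟨Q, hQ, hc⟩ := Ideal.exists_comap_eq_of_mem_minimalPrimes_of_injective hinj ⊥
    (by rw [IsDomain.minimalPrimes_eq_singleton_bot]; rfl)
  refine not_algInd_dom (k := k) (D := A ⧸ Q) ((ringKrullDim_quotient_le Q).trans h)
    (fun i => Ideal.Quotient.mkₐ k Q (a i)) ?_
  rw [algebraicIndependent_iff]
  intro p hp
  have : p ∈ Q.comap (aeval a : MvPolynomial (Fin 3) k →ₐ[k] A).toRingHom := by
    rw [Ideal.mem_comap]
    have h2 : (aeval fun i => Ideal.Quotient.mkₐ k Q (a i)) p = Ideal.Quotient.mkₐ k Q (aeval a p) := by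
      rw [← AlgHom.comp_apply, comp_aeval]
    rw [h2] at hp
    exact Ideal.Quotient.eq_zero_iff_mem.1 hp
  rw [hc] at this
  exact this

end DimThree

section MonicReg

open RingTheory.Sequence

/-- `p` is monic in the variable `v` -/
def MonicIn {σ k : Type*} [CommRing k] (v : σ) (p : MvPolynomial σ k) : Prop :=
  ∃ (D : ℕ) (q : MvPolynomial σ k), p = X v ^ D + q ∧ ∀ a ∈ q.support, a v < D

lemma monicIn_regular {σ k : Type*} [DecidableEq σ] [CommRing k] [IsDomain k] (v : σ) (p : MvPolynomial σ k)
    (hp : MonicIn v p) (s : Set (MvPolynomial σ k)) (hs : ∀ x ∈ s, degreeOf v x = 0)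
    (g : MvPolynomial σ k) (hg : p * g ∈ Ideal.span s) : g ∈ Ideal.span s := by
  let Φ : MvPolynomial σ k ≃ₐ[k] Polynomial (MvPolynomial {w // w ≠ v} k) :=
    (renameEquiv k (Equiv.optionSubtypeNe v).symm).trans (optionEquivLeft k _)
  have hdeg : ∀ x, (Φ x).natDegree = degreeOf v x := by
    intro x
    change (optionEquivLeft k _ (rename _ x)).natDegree = _
    rw [natDegree_optionEquivLeft]
    have h0 : (none : Option {w // w ≠ v}) = (Equiv.optionSubtypeNe v).symm v := by simp
    rw [h0, degreeOf_rename_of_injective (Equiv.injective _)]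
  have hX : Φ (X v) = Polynomial.X := by
    change (optionEquivLeft k _ (rename _ _)) = _
    rw [rename_X]; simp
  obtain ⟨D, q, rfl, hq⟩ := hp
  have hmon : (Φ (X v ^ D + q)).Monic := by
    rw [map_add, map_pow, hX]
    apply Polynomial.monic_X_pow_add
    by_cases hq0 : q = 0
    · simp [hq0]
    · have hD : 0 < D := by
        obtain ⟨a, ha⟩ := support_nonempty.2 hq0
        exact lt_of_le_of_lt (Nat.zero_le _) (hq a ha)
      refine lt_of_le_of_lt Polynomial.degree_le_natDegree ?_
      rw [hdeg]
      exact_mod_cast (degreeOf_lt_iff hD).2 hq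
  -- the ideal
  set P : Ideal (MvPolynomial {w // w ≠ v} k) := Ideal.span ((fun x => (Φ x).coeff 0) '' s)
  have hspan : (Ideal.span s).map Φ.toRingEquiv.toRingHom = P.map Polynomial.C := by
    rw [Ideal.map_span, Ideal.map_span, Set.image_image]
    congr 1
    refine Set.image_congr fun x hx => ?_
    exact Polynomial.eq_C_of_natDegree_eq_zero ((hdeg x).trans (hs x hx))
  have hmem : ∀ x, x ∈ Ideal.span s ↔ Φ x ∈ P.map Polynomial.C := by
    intro x
    rw [← hspan]
    constructor
    · exact fun h => Ideal.mem_map_of_mem _ h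
    · intro h
      obtain ⟨y, hy, hxy⟩ := (Ideal.mem_map_iff_of_surjective Φ.toRingEquiv.toRingHom Φ.surjective).1 h
      have : y = x := Φ.injective hxy
      exact this ▸ hy
  have hq' : ∀ x : Polynomial (MvPolynomial {w // w ≠ v} k), x ∈ P.map Polynomial.C ↔
      x.map (Ideal.Quotient.mk P) = 0 := by
    intro x
    rw [Ideal.mem_map_C_iff, Polynomial.ext_iff]
    simp [Polynomial.coeff_map, Ideal.Quotient.eq_zero_iff_mem]
  rw [hmem, hq'] at hg ⊢
  rw [map_mul, Polynomial.map_mul] at hg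
  exact ((hmon.map _).mul_right_eq_zero_iff).1 hg

lemma list_regular {σ k : Type*} [DecidableEq σ] [CommRing k] [IsDomain k] (P : σ → MvPolynomial σ k)
    (vs : List σ) (hn : vs.Nodup) (hm : ∀ v ∈ vs, MonicIn v (P v))
    (hd : ∀ v ∈ vs, ∀ w ∈ vs, v ≠ w → degreeOf v (P w) = 0) :
    IsWeaklyRegular (MvPolynomial σ k) (vs.map P) := by
  constructor
  intro i hi
  rw [isSMulRegular_quotient_iff_mem_of_smul_mem]
  intro x hx
  simp only [Ideal.smul_eq_mul, Ideal.mul_top] at hx ⊢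
  have hi' : i < vs.length := by simpa using hi
  rw [List.getElem_map] at hx
  refine monicIn_regular (vs[i]) (P vs[i]) (hm _ (List.getElem_mem _)) _ ?_ x hx
  intro y hy
  rw [Set.mem_ofPred_eq, ← List.map_take, List.mem_map] at hy
  obtain ⟨w, hw, rfl⟩ := hy
  refine hd _ (List.getElem_mem _) _ (List.mem_of_mem_take hw) ?_
  rintro rfl
  obtain ⟨j, hj, hj'⟩ := List.mem_take_iff_getElem.1 hw
  have := (hn.getElem_inj_iff).1 hj'
  omega

lemma monic_of_hom {σ k : Type*} [DecidableEq σ] [Field k] {v z y : σ} (hvz : v ≠ z) (hvy : v ≠ y) (hzy : z ≠ y)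
    (G : MvPolynomial σ k) (hG : G ≠ 0) (hv : ∀ a ∈ G.support, ∀ w, w ≠ v → w ≠ z → w ≠ y → a w = 0)
    (α β : ℕ) (hab : ∀ a ∈ G.support, a v + a z = α ∧ a y = β) :
    ∃ p, MonicIn v p ∧ (∀ w, w ≠ v → w ≠ z → w ≠ y → degreeOf w p = 0) ∧
      ∃ c, (X z * X y) ^ (α + β) * p = c * G := by
  obtain ⟨a0, ha0, hmax⟩ := Finset.exists_max_image G.support (fun a => a v) (support_nonempty.2 hG)
  set D := a0 v
  set u := coeff a0 G
  have hu : u ≠ 0 := mem_support_iff.1 ha0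
  let t : (σ →₀ ℕ) → MvPolynomial σ k := fun a =>
    monomial (Finsupp.single v (a v) + Finsupp.single z (D - a v)) (u⁻¹ * coeff a G)
  have heq : ∀ a ∈ G.support, a = Finsupp.single v (a v) + Finsupp.single z (a z) + Finsupp.single y (a y) := by
    intro a ha
    ext w
    simp only [Finsupp.add_apply, Finsupp.single_apply]
    by_cases h1 : w = v
    · subst h1; simp [hvz.symm, hvy.symm]
    by_cases h2 : w = z
    · subst h2; simp [hvz, hzy.symm]
    by_cases h3 : w = y
    · subst h3; simp [hvy, hzy]
    · rw [hv a ha w h1 h2 h3]; simp [Ne.symm h1, Ne.symm h2, Ne.symm h3]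
  refine ⟨∑ a ∈ G.support, t a, ⟨D, ∑ a ∈ G.support.erase a0, t a, ?_, ?_⟩, ?_, ?_⟩
  · rw [← Finset.add_sum_erase _ _ ha0]
    congr 1
    simp only [t, D, u]
    rw [inv_mul_cancel₀ hu, X_pow_eq_monomial]; simp
  · intro b hb
    obtain ⟨a, ha, hb⟩ := Finset.mem_biUnion.1 (support_sum hb)
    have hb' := support_monomial_subset hb
    rw [Finset.mem_singleton] at hb'
    subst hb'
    have ha1 := Finset.mem_of_mem_erase ha
    have hle := hmax a ha1
    have hne : a v ≠ D := by
      intro h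
      refine (Finset.mem_erase.1 ha).1 ?_
      rw [heq a ha1, heq a0 ha0]
      have h1 := hab a ha1
      have h2 := hab a0 ha0
      have h3 : a v = a0 v := h
      have h4 : a z = a0 z := by omega
      rw [h3, h4, h1.2, h2.2]
    simp [hvz.symm]
    omega
  · intro w h1 h2 h3
    rw [← Nat.le_zero]
    refine (degreeOf_sum_le _ _ _).trans ?_
    rw [Finset.sup_le_iff]
    intro a _
    rw [degreeOf_le_iff]
    intro b hb
    have hb' := support_monomial_subset hb
    rw [Finset.mem_singleton] at hb'
    subst hb'
    simp [Finsupp.single_apply, Ne.symm h1, Ne.symm h2]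
  · have hfac : C u * X z ^ (α - D) * X y ^ β * (∑ a ∈ G.support, t a) = G := by
      conv_rhs => rw [G.as_sum]
      rw [Finset.mul_sum]
      refine Finset.sum_congr rfl fun a ha => ?_
      simp only [t]
      rw [X_pow_eq_monomial, X_pow_eq_monomial, C_mul_monomial, monomial_mul, monomial_mul]
      have h1 := hab a ha
      have h2 := hab a0 ha0
      have h3 := hmax a ha
      have h4 : α - D + (D - a v) = a z := by omega
      have h5 : Finsupp.single z (α - D) + Finsupp.single y β + (Finsupp.single v (a v) + Finsupp.single z (D - a v)) = a := by
        conv_rhs => rw [heq a ha]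
        rw [← h1.2, ← h4, Finsupp.single_add]
        abel
      rw [h5]
      congr 1
      field_simp
    have hD : D ≤ α := by have := hab a0 ha0; omega
    refine ⟨C u⁻¹ * X z ^ (β + D) * X y ^ α, ?_⟩
    conv_rhs => rw [← hfac]
    have h1 : C u⁻¹ * C u = (1 : MvPolynomial σ k) := by rw [← C_mul, inv_mul_cancel₀ hu, C_1]
    have h2 : X z ^ (β + D) * X z ^ (α - D) = (X z : MvPolynomial σ k) ^ (α + β) := by
      rw [← pow_add]; congr 1; omega
    calc (X z * X y) ^ (α + β) * (∑ a ∈ G.support, t a)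
        = (C u⁻¹ * C u) * (X z ^ (β + D) * X z ^ (α - D)) * (X y ^ α * X y ^ β) * (∑ a ∈ G.support, t a) := by
          rw [h1, h2, ← pow_add]; ring
      _ = _ := by ring

end MonicReg

section Local

lemma sat_pow {k : Type} [Field k] {n m : ℕ} {I C : Ideal (PolyS k n m)} {q c : PolyS k n m}
    (hq : q ∈ satIdeal I C) (hc : c ∈ C) : ∃ t : ℕ, c ^ t * q ∈ I := by
  unfold satIdeal at hq
  induction hq using Submodule.iSup_induction' with
  | mem t x hx =>
    rw [Submodule.mem_colon] at hx
    refine ⟨t, ?_⟩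
    rw [mul_comm]
    exact hx (c ^ t) (Set.pow_mem_pow hc)
  | zero => exact ⟨0, by simp⟩
  | add x y _ _ hx hy =>
    obtain ⟨t, ht⟩ := hx
    obtain ⟨s, hs⟩ := hy
    refine ⟨t + s, ?_⟩
    have : c ^ (t + s) * (x + y) = c ^ s * (c ^ t * x) + c ^ t * (c ^ s * y) := by ring
    rw [this]
    exact I.add_mem (I.mul_mem_left _ ht) (I.mul_mem_left _ hs)

lemma XX_mem {k : Type} [Field k] {n m : ℕ} (i : Fin (n+1)) (j : Fin (m+1)) :
    (X (Sum.inl i) * X (Sum.inr j) : PolyS k n m) ∈ Birr k n m :=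
  Ideal.mul_mem_mul (Ideal.subset_span ⟨i, rfl⟩) (Ideal.subset_span ⟨j, rfl⟩)

lemma comp_mem {k : Type} [Field k] {n m d e : ℕ} {f : Fin (n + m) → PolyS k n m}
    (hf : ∀ i, f i ∈ grad k n m ((d : ℤ), (e : ℤ))) {p : PolyS k n m} (hp : p ∈ Ideal.span (Set.range f)) (γ : ℤ × ℤ) :
    weightedHomogeneousComponent (wt n m) γ p ∈ Ideal.span (Set.range f) := by
  letI := MvPolynomial.weightedGradedAlgebra k (wt n m)
  refine MvPolynomial.weightedHomogeneousComponent_mem_of_mem k (wt n m) ?_ hp γ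
  refine Ideal.homogeneous_span _ _ ?_
  rintro _ ⟨i, rfl⟩
  exact ⟨_, hf i⟩

lemma wt_fst (n m : ℕ) (a : (Fin (n+1) ⊕ Fin (m+1)) →₀ ℕ) :
    (Finsupp.weight (wt n m) a).1 = ∑ i, (a (Sum.inl i) : ℤ) := by
  rw [Finsupp.weight_apply, Finsupp.sum_fintype _ _ (by simp), Prod.fst_sum, Fintype.sum_sum_type]
  simp [wt]

lemma wt_snd (n m : ℕ) (a : (Fin (n+1) ⊕ Fin (m+1)) →₀ ℕ) :
    (Finsupp.weight (wt n m) a).2 = ∑ j, (a (Sum.inr j) : ℤ) := by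
  rw [Finsupp.weight_apply, Finsupp.sum_fintype _ _ (by simp), Prod.snd_sum, Fintype.sum_sum_type]
  simp [wt]

/-- three-variable relation -/
lemma exists_rel {k : Type} [Field k] {n m d e : ℕ} {f : Fin (n + m) → PolyS k n m}
    {I : Ideal (PolyS k n m)} (hCI : IsCIPoints k n m d e f I) (i : Fin (n+1)) (j : Fin (m+1))
    (v : Fin (n+1) ⊕ Fin (m+1)) (hvi : v ≠ Sum.inl i) (hvj : v ≠ Sum.inr j) :
    ∃ G ∈ I, G ≠ 0 ∧ (∃ γ, ∀ a ∈ G.support, Finsupp.weight (wt n m) a = γ) ∧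
      ∀ a ∈ G.support, ∀ w, w ≠ v → w ≠ Sum.inl i → w ≠ Sum.inr j → a w = 0 := by
  obtain ⟨hf, rfl, hcod⟩ := hCI
  set I := Ideal.span (Set.range f)
  set J := satIdeal I (Birr k n m)
  have hdim : ringKrullDim (PolyS k n m ⧸ J) ≤ 2 := by
    unfold CodimEq at hcod
    rw [hcod, Nat.add_sub_cancel_left]; rfl
  let τ : Fin 3 → (Fin (n+1) ⊕ Fin (m+1)) := ![Sum.inl i, Sum.inr j, v]
  have hτ : Function.Injective τ := by
    intro a b hab
    fin_cases a <;> fin_cases b <;> simp [τ] at hab ⊢ <;> simp_all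
  have h := not_algInd (k := k) hdim (fun l => Ideal.Quotient.mkₐ k J (X (τ l)))
  rw [algebraicIndependent_iff] at h
  push Not at h
  obtain ⟨q, hq, hq0⟩ := h
  have hq1 : rename τ q ∈ J := by
    have h2 : (aeval fun l => Ideal.Quotient.mkₐ k J (X (τ l))) q = Ideal.Quotient.mkₐ k J (rename τ q) := by
      rw [rename_eq_aeval, ← AlgHom.comp_apply, comp_aeval]; rfl
    rw [h2] at hq
    exact Ideal.Quotient.eq_zero_iff_mem.1 hq
  obtain ⟨t, ht⟩ := sat_pow hq1 (XX_mem i j)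
  set q2 : MvPolynomial (Fin 3) k := (X 0 * X 1) ^ t * q
  have hq2 : q2 ≠ 0 := mul_ne_zero (pow_ne_zero _ (mul_ne_zero (X_ne_zero _) (X_ne_zero _))) hq0
  have hr : rename τ q2 = (X (Sum.inl i) * X (Sum.inr j)) ^ t * rename τ q := by
    simp [q2, τ]
  rw [← hr] at ht
  have hne : rename τ q2 ≠ 0 := by
    intro h0
    exact hq2 (rename_injective τ hτ (by rw [h0, map_zero]))
  obtain ⟨a0, ha0⟩ := support_nonempty.2 hne
  set γ := Finsupp.weight (wt n m) a0
  classical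
  refine ⟨weightedHomogeneousComponent (wt n m) γ (rename τ q2), comp_mem hf ht γ, ?_, ⟨γ, ?_⟩, ?_⟩
  · intro h0
    have : coeff a0 (weightedHomogeneousComponent (wt n m) γ (rename τ q2)) = 0 := by rw [h0]; simp
    rw [coeff_weightedHomogeneousComponent, if_pos rfl] at this
    exact mem_support_iff.1 ha0 this
  · intro a ha
    rw [mem_support_iff, coeff_weightedHomogeneousComponent] at ha
    by_contra hc
    rw [if_neg hc] at ha; exact ha rfl
  · intro a ha w h1 h2 h3
    rw [mem_support_iff, coeff_weightedHomogeneousComponent] at ha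
    have ha' : coeff a (rename τ q2) ≠ 0 := by
      intro h0; rw [h0] at ha; simp at ha
    obtain ⟨u, rfl, _⟩ := coeff_rename_ne_zero _ _ _ ha'
    refine Finsupp.mapDomain_notin_range _ _ ?_
    rintro ⟨l, hl⟩
    fin_cases l <;> simp [τ] at hl
    · exact h2 hl.symm
    · exact h3 hl.symm
    · exact h1 hl.symm

lemma exists_monic {k : Type} [Field k] {n m d e : ℕ} {f : Fin (n + m) → PolyS k n m}
    {I : Ideal (PolyS k n m)} (hCI : IsCIPoints k n m d e f I) (i : Fin (n+1)) (j : Fin (m+1))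
    (v : Fin (n+1) ⊕ Fin (m+1)) (hvi : v ≠ Sum.inl i) (hvj : v ≠ Sum.inr j) :
    ∃ p : PolyS k n m, MonicIn v p ∧ (∀ w, w ≠ v → w ≠ Sum.inl i → w ≠ Sum.inr j → degreeOf w p = 0) ∧
      ∃ t : ℕ, (X (Sum.inl i) * X (Sum.inr j)) ^ t * p ∈ I := by
  obtain ⟨G, hGI, hG0, ⟨γ, hγ⟩, hvar⟩ := exists_rel hCI i j v hvi hvj
  rcases v with i' | j'
  · have hne : i' ≠ i := fun h => hvi (by rw [h])
    obtain ⟨p, hp1, hp2, c, hc⟩ := monic_of_hom hvi hvj (by simp) G hG0 hvar γ.1.toNat γ.2.toNat (by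
      intro a ha
      have h1 := wt_fst n m a
      have h2 := wt_snd n m a
      rw [hγ a ha] at h1 h2
      rw [Fintype.sum_eq_single j (fun j1 hj1 => by rw [hvar a ha (Sum.inr j1) (by simp) (by simp) (by simpa using hj1)]; rfl)] at h2
      rw [Fintype.sum_eq_add i' i hne (fun j1 hj1 => by rw [hvar a ha (Sum.inl j1) (by simpa using hj1.1) (by simpa using hj1.2) (by simp)]; rfl)] at h1
      omega)
    exact ⟨p, hp1, hp2, _, by rw [hc]; exact I.mul_mem_left _ hGI⟩
  · have hne : j' ≠ j := fun h => hvj (by rw [h])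
    obtain ⟨p, hp1, hp2, c, hc⟩ := monic_of_hom hvj hvi (by simp) G hG0
       (fun a ha w h1 h2 h3 => hvar a ha w h1 h3 h2) γ.2.toNat γ.1.toNat (by
      intro a ha
      have h1 := wt_fst n m a
      have h2 := wt_snd n m a
      rw [hγ a ha] at h1 h2
      rw [Fintype.sum_eq_single i (fun j1 hj1 => by rw [hvar a ha (Sum.inl j1) (by simp) (by simpa using hj1) (by simp)]; rfl)] at h1
      rw [Fintype.sum_eq_add j' j hne (fun j1 hj1 => by rw [hvar a ha (Sum.inr j1) (by simpa using hj1.1) (by simp) (by simpa using hj1.2)]; rfl)] at h2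
      omega)
    refine ⟨p, hp1, fun w h1 h2 h3 => hp2 w h1 h3 h2, γ.2.toNat + γ.1.toNat, ?_⟩
    rw [mul_comm (X (Sum.inl i)), hc]; exact I.mul_mem_left _ hGI

/-- local exactness of the Koszul complex away from `x_i y_j = 0` -/
lemma kos_local {k : Type} [Field k] {n m d e : ℕ} {f : Fin (n + m) → PolyS k n m}
    {I : Ideal (PolyS k n m)} (hCI : IsCIPoints k n m d e f I) (i : Fin (n+1)) (j : Fin (m+1))
    (q : ℕ) (hq : 1 ≤ q) (z : Finset (Fin (n+m)) → PolyS k n m) (hz : Conc q z)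
    (hdz : kos Fin.val f z = 0) :
    ∃ (s : ℕ) (w : Finset (Fin (n+m)) → PolyS k n m), Conc (q+1) w ∧
        kos Fin.val f w = (X (Sum.inl i) * X (Sum.inr j) : PolyS k n m) ^ s • z := by
  classical
  have hex : ∀ v : Fin (n+1) ⊕ Fin (m+1), ∃ p : PolyS k n m, v ≠ Sum.inl i → v ≠ Sum.inr j →
     (MonicIn v p ∧ (∀ w, w ≠ v → w ≠ Sum.inl i → w ≠ Sum.inr j → degreeOf w p = 0) ∧
      ∃ t : ℕ, (X (Sum.inl i) * X (Sum.inr j)) ^ t * p ∈ I) := by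
    intro v
    by_cases h1 : v = Sum.inl i
    · exact ⟨0, fun h => absurd h1 h⟩
    by_cases h2 : v = Sum.inr j
    · exact ⟨0, fun _ h => absurd h2 h⟩
    obtain ⟨p, hp⟩ := exists_monic hCI i j v h1 h2
    exact ⟨p, fun _ _ => hp⟩
  choose P hP using hex
  have hI : I = Ideal.span (Set.range f) := hCI.2.1
  set A : Finset (Fin (n+1) ⊕ Fin (m+1)) := (Finset.univ.erase (Sum.inl i)).erase (Sum.inr j)
  have hA : ∀ v ∈ A.toList, v ≠ Sum.inl i ∧ v ≠ Sum.inr j := by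
    intro v hv
    rw [Finset.mem_toList] at hv
    simp only [A, Finset.mem_erase] at hv
    exact ⟨hv.2.1, hv.1⟩
  have hcard : A.card = n + m := by
    rw [Finset.card_erase_of_mem (by simp), Finset.card_erase_of_mem (by simp)]
    simp
  refine kos_depth f (X (Sum.inl i) * X (Sum.inr j)) (A.toList.map P) ?_ (PolyS k n m) ?_ q ?_ z hz hdz
  · intro x hx
    obtain ⟨v, hv, rfl⟩ := List.mem_map.1 hx
    rw [← hI]
    exact (hP v (hA v hv).1 (hA v hv).2).2.2
  · refine list_regular P _ A.nodup_toList (fun v hv => (hP v (hA v hv).1 (hA v hv).2).1) ?_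
    intro v hv w hw hvw
    exact (hP w (hA w hw).1 (hA w hw).2).2.1 v hvw (hA v hv).1 (hA v hv).2
  · simp [hcard]; omega

end Local

section Laurent

/-- Laurent polynomials -/
abbrev Lau (σ k : Type) [Field k] := AddMonoidAlgebra k (σ → ℤ)

variable {σ k : Type} [Field k]

/-- exponents as integers -/
def ex : (σ →₀ ℕ) →+ (σ → ℤ) where
  toFun b := fun i => (b i : ℤ)
  map_zero' := by ext i; simp
  map_add' x y := by ext i; simp

lemma ex_apply (b : σ →₀ ℕ) (i : σ) : ex b i = (b i : ℤ) := rfl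

lemma ex_inj : Function.Injective (ex : (σ →₀ ℕ) → (σ → ℤ)) := by
  intro a b h
  ext i
  have := congrFun h i
  simpa [ex_apply] using this

/-- inclusion of polynomials in Laurent polynomials -/
def toL : MvPolynomial σ k →+* Lau σ k := AddMonoidAlgebra.mapDomainRingHom k (ex : (σ →₀ ℕ) →+ (σ → ℤ))

lemma toL_monomial (b : σ →₀ ℕ) (r : k) : toL (monomial b r) = AddMonoidAlgebra.single (ex b) r := by
  simp [toL, monomial]

lemma toL_coeff (p : MvPolynomial σ k) (b : σ →₀ ℕ) : (toL p).coeff (ex b) = coeff b p := by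
  classical
  induction p using MvPolynomial.induction_on' with
  | monomial u a => rw [toL_monomial, AddMonoidAlgebra.coeff_single_apply, coeff_monomial]; simp [ex_inj.eq_iff]
  | add p q hp hq => rw [map_add, AddMonoidAlgebra.coeff_add, Finsupp.add_apply, hp, hq, coeff_add]

lemma toL_supp (p : MvPolynomial σ k) (a : σ → ℤ) (h : (toL p).coeff a ≠ 0) : ∃ b ∈ p.support, a = ex b := by
  by_contra hc
  push Not at hc
  apply h
  rw [p.as_sum, map_sum, AddMonoidAlgebra.coeff_sum, Finsupp.finset_sum_apply]
  refine Finset.sum_eq_zero fun b hb => ?_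
  classical
  rw [toL_monomial, AddMonoidAlgebra.coeff_single_apply, if_neg]
  exact fun hh => hc b hb hh.symm

lemma toL_inj : Function.Injective (toL : MvPolynomial σ k → Lau σ k) := by
  intro p q h
  ext b
  rw [← toL_coeff, ← toL_coeff, h]

lemma exists_toL [Finite σ] (c : Lau σ k) (h : ∀ a, c.coeff a ≠ 0 → ∀ i, 0 ≤ a i) : ∃ p, toL p = c := by
  refine ⟨∑ a ∈ c.coeff.support, monomial (Finsupp.equivFunOnFinite.symm fun i => (a i).toNat) (c.coeff a), ?_⟩
  rw [map_sum]
  conv_rhs => rw [← AddMonoidAlgebra.sum_coeff_single c]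
  refine Finset.sum_congr rfl fun a ha => ?_
  rw [toL_monomial]
  congr 1
  ext i
  rw [ex_apply]
  simp [h a (Finsupp.mem_support_iff.1 ha) i]

/-- restriction of the support -/
def filt (P : (σ → ℤ) → Prop) : Lau σ k →+ Lau σ k where
  toFun c := by classical exact AddMonoidAlgebra.ofCoeff (c.coeff.filter P)
  map_zero' := by classical ext a; simp [Finsupp.filter_apply]
  map_add' x y := by classical ext a; simp [Finsupp.filter_apply]

lemma filt_pos {P : (σ → ℤ) → Prop} {a} (h : P a) (c : Lau σ k) : (filt P c).coeff a = c.coeff a := by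
  classical exact Finsupp.filter_apply_pos P _ h

lemma filt_neg {P : (σ → ℤ) → Prop} {a} (h : ¬ P a) (c : Lau σ k) : (filt P c).coeff a = 0 := by
  classical exact Finsupp.filter_apply_neg P _ h

lemma filt_ne {P : (σ → ℤ) → Prop} {a} {c : Lau σ k} (h : (filt P c).coeff a ≠ 0) : P a ∧ c.coeff a ≠ 0 := by
  by_cases hP : P a
  · exact ⟨hP, by rwa [filt_pos hP] at h⟩
  · exact absurd (filt_neg hP c) h

lemma filt_self {P : (σ → ℤ) → Prop} {c : Lau σ k} (h : ∀ a, c.coeff a ≠ 0 → P a) : filt P c = c := by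
  ext a
  by_cases hP : P a
  · exact filt_pos hP c
  · rw [filt_neg hP]; by_contra hc; exact hP (h a (Ne.symm hc))

lemma filt_zero {P : (σ → ℤ) → Prop} {c : Lau σ k} (h : ∀ a, c.coeff a ≠ 0 → ¬ P a) : filt P c = 0 := by
  ext a
  by_cases hP : P a
  · rw [filt_pos hP]; by_contra hc; exact h a hc hP
  · rw [filt_neg hP]; rfl

lemma filt_add_not (P : (σ → ℤ) → Prop) (c : Lau σ k) : filt P c + filt (fun a => ¬ P a) c = c := by
  ext a
  rw [AddMonoidAlgebra.coeff_add, Finsupp.add_apply]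
  by_cases hP : P a
  · rw [filt_pos hP, filt_neg (not_not.2 hP), add_zero]
  · rw [filt_neg hP, filt_pos (P := fun a => ¬ P a) hP, zero_add]

lemma mul_supp {x y : Lau σ k} {a} (h : (x * y).coeff a ≠ 0) :
    ∃ b c, x.coeff b ≠ 0 ∧ y.coeff c ≠ 0 ∧ b + c = a := by
  classical
  have := AddMonoidAlgebra.support_coeff_mul_subset x y (Finsupp.mem_support_iff.2 h)
  obtain ⟨b, hb, c, hc, rfl⟩ := Finset.mem_add.1 this
  exact ⟨b, c, Finsupp.mem_support_iff.1 hb, Finsupp.mem_support_iff.1 hc, rfl⟩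

lemma toL_mul_supp {x : MvPolynomial σ k} {y : Lau σ k} {a} (h : (toL x * y).coeff a ≠ 0) :
    ∃ b ∈ x.support, ∃ c, y.coeff c ≠ 0 ∧ a = ex b + c := by
  obtain ⟨b, c, hb, hc, rfl⟩ := mul_supp h
  obtain ⟨b', hb', rfl⟩ := toL_supp x b hb
  exact ⟨b', hb', c, hc, rfl⟩

lemma filt_mul (P P' : (σ → ℤ) → Prop) (x : MvPolynomial σ k) (hx : ∀ b ∈ x.support, ∀ a, P' (ex b + a) ↔ P a)
    (c : Lau σ k) : filt P' (toL x * c) = toL x * filt P c := by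
  conv_lhs => rw [← filt_add_not P c, mul_add, map_add]
  have h1 : filt P' (toL x * filt P c) = toL x * filt P c := by
    refine filt_self fun a ha => ?_
    obtain ⟨b, hb, c', hc', rfl⟩ := toL_mul_supp ha
    rw [hx b hb]; exact (filt_ne hc').1
  have h2 : filt P' (toL x * filt (fun a => ¬ P a) c) = 0 := by
    refine filt_zero fun a ha => ?_
    obtain ⟨b, hb, c', hc', rfl⟩ := toL_mul_supp ha
    rw [hx b hb]; exact (filt_ne hc').1
  rw [h1, h2, add_zero]

/-- evaluate one coefficient -/
def evc (a : σ → ℤ) : Lau σ k →+ k where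
  toFun c := c.coeff a
  map_zero' := rfl
  map_add' _ _ := rfl

lemma evc_apply (a : σ → ℤ) (c : Lau σ k) : evc a c = c.coeff a := rfl

/-- Laurent monomial -/
def mon (a : σ → ℤ) : Lau σ k := AddMonoidAlgebra.single a 1

lemma mon_mul_coeff (a b : σ → ℤ) (c : Lau σ k) : (mon a * c).coeff b = c.coeff (b - a) := by
  rw [mon, AddMonoidAlgebra.coeff_single_mul_apply, one_mul]
  congr 1; abel

lemma mon_mul_mon (a b : σ → ℤ) : (mon a * mon b : Lau σ k) = mon (a + b) := by
  simp [mon]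

lemma mon_zero : (mon 0 : Lau σ k) = 1 := rfl

lemma toL_X (i : σ) : toL (X i : MvPolynomial σ k) = mon (ex (Finsupp.single i 1)) := by
  rw [X, toL_monomial]; rfl

end Laurent

section Double

abbrev Ix (n m : ℕ) := Fin (n+1) ⊕ Fin (m+1)
abbrev LL (k : Type) [Field k] (n m : ℕ) := Lau (Ix n m) k
abbrev KK (k : Type) [Field k] (n m : ℕ) := Finset (Fin (n+m)) → LL k n m
abbrev CC (k : Type) [Field k] (n m : ℕ) := Finset (Ix n m) → KK k n m

/-- ranking of the variables -/
def rk (n m : ℕ) : Ix n m → ℕ := Sum.elim (fun i => i.val) (fun j => n + 1 + j.val)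

lemma rk_inj (n m : ℕ) : Function.Injective (rk n m) := by
  rintro (a | a) (b | b) h
  · simp [rk] at h; rw [Fin.ext h]
  · have := a.2; simp [rk] at h; omega
  · have := b.2; simp [rk] at h; omega
  · simp [rk] at h; rw [Fin.ext h]

def Xs (n m : ℕ) : Finset (Ix n m) := Finset.univ.map ⟨Sum.inl, Sum.inl_injective⟩
def Ys (n m : ℕ) : Finset (Ix n m) := Finset.univ.map ⟨Sum.inr, Sum.inr_injective⟩

lemma mem_Xs {n m : ℕ} {v : Ix n m} : v ∈ Xs n m ↔ ∃ i, v = Sum.inl i := by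
  simp [Xs, eq_comm]
lemma mem_Ys {n m : ℕ} {v : Ix n m} : v ∈ Ys n m ↔ ∃ i, v = Sum.inr i := by
  simp [Ys, eq_comm]

variable {k : Type} [Field k] {n m : ℕ}

/-- full Čech differential -/
def dd : CC k n m →+ CC k n m := dA (rk n m) Finset.univ
def dX : CC k n m →+ CC k n m := dA (rk n m) (Xs n m)
def dY : CC k n m →+ CC k n m := dA (rk n m) (Ys n m)

lemma dd_eq (c : CC k n m) : dd c = dX c + dY c := by
  simp only [dd, dX, dY, dA_apply, Xs, Ys, Finset.sum_map]
  rw [Fintype.sum_sum_type]; rfl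

lemma dd_dd (c : CC k n m) : dd (dd c) = 0 := dA_sq (rk_inj n m) _ _
lemma dX_dX (c : CC k n m) : dX (dX c) = 0 := dA_sq (rk_inj n m) _ _
lemma dY_dY (c : CC k n m) : dY (dY c) = 0 := dA_sq (rk_inj n m) _ _
lemma dY_dX (c : CC k n m) : dY (dX c) = - dX (dY c) := dA_dA (rk_inj n m) _ _ _

lemma dd_dX (c : CC k n m) : dd (dX c) = - dX (dY c) := by
  rw [dd_eq, dX_dX, dY_dX, zero_add]

lemma dd_dX_dY (c : CC k n m) : dd (dX (dY c)) = 0 := by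
  rw [dd_dX, dY_dY, map_zero, neg_zero]

/-- Koszul differential with Laurent coefficients -/
def kL (f : Fin (n+m) → PolyS k n m) : KK k n m →+ KK k n m := kos Fin.val (fun i => toL (f i))

def PAR (f : Fin (n+m) → PolyS k n m) : CC k n m →+ CC k n m := (kL f).compLeft _

lemma PAR_apply (f : Fin (n+m) → PolyS k n m) (c : CC k n m) (ρ) : PAR f c ρ = kL f (c ρ) := rfl

lemma kL_kL (f : Fin (n+m) → PolyS k n m) (z : KK k n m) : kL f (kL f z) = 0 := kos_sq Fin.val_injective z

lemma PAR_PAR (f : Fin (n+m) → PolyS k n m) (c : CC k n m) : PAR f (PAR f c) = 0 := by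
  ext1 ρ; simp only [PAR_apply, kL_kL]; rfl

lemma PAR_dd (f : Fin (n+m) → PolyS k n m) (c : CC k n m) : PAR f (dd c) = dd (PAR f c) :=
  (dA_comp (r := rk n m) (kL f) Finset.univ c).symm
lemma PAR_dX (f : Fin (n+m) → PolyS k n m) (c : CC k n m) : PAR f (dX c) = dX (PAR f c) :=
  (dA_comp (r := rk n m) (kL f) (Xs n m) c).symm
lemma PAR_dY (f : Fin (n+m) → PolyS k n m) (c : CC k n m) : PAR f (dY c) = dY (PAR f c) :=
  (dA_comp (r := rk n m) (kL f) (Ys n m) c).symm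

/-- evaluate at `T` and `a` -/
def evTa (T : Finset (Fin (n+m))) (a : Ix n m → ℤ) : KK k n m →+ k := (evc a).comp (Pi.evalAddMonoidHom _ T)

lemma evTa_apply (T : Finset (Fin (n+m))) (a : Ix n m → ℤ) (z : KK k n m) : evTa T a z = (z T).coeff a := rfl

/-- support condition -/
def Sup (Q : Finset (Ix n m) → Finset (Fin (n+m)) → (Ix n m → ℤ) → Prop) (c : CC k n m) : Prop :=
  ∀ ρ T a, (c ρ T).coeff a ≠ 0 → Q ρ T a

variable {Q Q' : Finset (Ix n m) → Finset (Fin (n+m)) → (Ix n m → ℤ) → Prop}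

lemma Sup.mono {c : CC k n m} (h : Sup Q c) (hQ : ∀ ρ T a, Q ρ T a → Q' ρ T a) : Sup Q' c :=
  fun ρ T a hc => hQ _ _ _ (h ρ T a hc)

lemma Sup.zero : Sup Q (0 : CC k n m) := fun ρ T a h => absurd rfl h

lemma Sup.add {c c' : CC k n m} (h : Sup Q c) (h' : Sup Q c') : Sup Q (c + c') := by
  intro ρ T a hc
  by_contra hQ
  apply hc
  have h1 : (c ρ T).coeff a = 0 := by by_contra h1; exact hQ (h _ _ _ h1)
  have h2 : (c' ρ T).coeff a = 0 := by by_contra h1; exact hQ (h' _ _ _ h1)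
  change (c ρ T).coeff a + (c' ρ T).coeff a = 0
  rw [h1, h2, add_zero]

lemma Sup.neg {c : CC k n m} (h : Sup Q c) : Sup Q (-c) := by
  intro ρ T a hc
  apply h
  intro h0
  apply hc
  change - (c ρ T).coeff a = 0
  rw [h0, neg_zero]

lemma Sup.sub {c c' : CC k n m} (h : Sup Q c) (h' : Sup Q c') : Sup Q (c - c') := by
  rw [sub_eq_add_neg]; exact h.add h'.neg

lemma Sup.sum {α : Type*} {s : Finset α} {c : α → CC k n m} (h : ∀ x ∈ s, Sup Q (c x)) : Sup Q (∑ x ∈ s, c x) := by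
  classical
  induction s using Finset.induction_on with
  | empty => exact Sup.zero
  | insert x s hx ih =>
    rw [Finset.sum_insert hx]
    exact (h x (by simp)).add (ih fun y hy => h y (by simp [hy]))

lemma Sup.eq_zero {c : CC k n m} (h : Sup Q c) (hQ : ∀ ρ T a, ¬ Q ρ T a) : c = 0 := by
  ext ρ T a
  by_contra hc
  exact hQ _ _ _ (h ρ T a hc)

lemma Sup.dA {A : Finset (Ix n m)} {c : CC k n m} (h : Sup Q c)
    (hQ : ∀ i ∈ A, ∀ ρ T a, i ∉ ρ → Q ρ T a → Q' (insert i ρ) T a) : Sup Q' (dA (rk n m) A c) := by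
  intro ρ T a hc
  have := congrFun (dA_comp (r := rk n m) (evTa T a) A c) ρ
  rw [evTa_apply] at this
  rw [← this] at hc
  obtain ⟨i, hi, ρ', hiρ, rfl, hne⟩ := dA_ne_zero hc
  exact hQ i hi ρ' T a hiρ (h _ _ _ hne)

lemma Sup.ann {i : Ix n m} {c : CC k n m} (h : Sup Q c)
    (hQ : ∀ ρ T a, i ∉ ρ → Q (insert i ρ) T a → Q' ρ T a) : Sup Q' (ann (rk n m) i c) := by
  intro ρ T a hc
  have := congrFun (ann_comp (r := rk n m) (evTa T a) i c) ρ
  rw [evTa_apply] at this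
  rw [← this] at hc
  obtain ⟨hi, hne⟩ := ann_ne_zero hc
  exact hQ ρ T a hi (h _ _ _ hne)

lemma kL_ne {f : Fin (n+m) → PolyS k n m} {z : KK k n m} {T} {a} (h : (kL f z T).coeff a ≠ 0) :
    ∃ i, i ∉ T ∧ ∃ b ∈ (f i).support, ∃ a', (z (insert i T)).coeff a' ≠ 0 ∧ a = ex b + a' := by
  unfold kL at h
  rw [kos_apply2, AddMonoidAlgebra.coeff_sum, Finsupp.finset_sum_apply] at h
  obtain ⟨i, _, hi⟩ := Finset.exists_ne_zero_of_sum_ne_zero h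
  rw [smul_eq_mul] at hi
  obtain ⟨b, hb, a', ha', rfl⟩ := toL_mul_supp hi
  have := congrFun (ann_comp (r := Fin.val) (evc a') i z) T
  rw [evc_apply] at this
  rw [← this] at ha'
  obtain ⟨h1, h2⟩ := ann_ne_zero ha'
  exact ⟨i, h1, b, hb, a', h2, rfl⟩

lemma Sup.PAR {f : Fin (n+m) → PolyS k n m} {c : CC k n m} (h : Sup Q c)
    (hQ : ∀ i, ∀ b ∈ (f i).support, ∀ ρ T a, i ∉ T → Q ρ (insert i T) a → Q' ρ T (ex b + a)) : Sup Q' (PAR f c) := by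
  intro ρ T a hc
  obtain ⟨i, hi, b, hb, a', ha', rfl⟩ := kL_ne hc
  exact hQ i b hb ρ T a' hi (h _ _ _ ha')

/-- bidegree of an exponent -/
def bdeg (a : Ix n m → ℤ) : ℤ × ℤ := (∑ i, a (Sum.inl i), ∑ j, a (Sum.inr j))

lemma bdeg_add (a b : Ix n m → ℤ) : bdeg (a + b) = bdeg a + bdeg b := by
  simp [bdeg, Finset.sum_add_distrib]

lemma bdeg_ex (b : Ix n m →₀ ℕ) : bdeg (ex b) = Finsupp.weight (wt n m) b := by
  ext
  · rw [wt_fst]; rfl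
  · rw [wt_snd]; rfl

/-- target degree of Koszul step `q` -/
def tdeg (d e : ℕ) (μ : ℤ × ℤ) (q : ℕ) : ℤ × ℤ := (μ.1 - q * d, μ.2 - q * e)

lemma bdeg_f {d e : ℕ} {f : Fin (n+m) → PolyS k n m} (hf : ∀ i, f i ∈ grad k n m ((d : ℤ), (e : ℤ)))
    {i} {b} (hb : b ∈ (f i).support) : bdeg (ex b) = ((d : ℤ), (e : ℤ)) := by
  rw [bdeg_ex]
  exact hf i (mem_support_iff.1 hb)

lemma tdeg_succ (d e : ℕ) (μ : ℤ × ℤ) (q : ℕ) : ((d : ℤ), (e : ℤ)) + tdeg d e μ (q+1) = tdeg d e μ q := by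
  ext <;> simp [tdeg] <;> ring

/-- admissibility -/
def Adm (d e : ℕ) (μ : ℤ × ℤ) (p q : ℕ) (ρ : Finset (Ix n m)) (T : Finset (Fin (n+m))) (a : Ix n m → ℤ) : Prop :=
  ρ.card = p + 1 ∧ (∃ i, Sum.inl i ∈ ρ) ∧ (∃ j, Sum.inr j ∈ ρ) ∧ T.card = q ∧ (∀ i, a i < 0 → i ∈ ρ) ∧
    bdeg a = tdeg d e μ q

variable {d e : ℕ} {μ : ℤ × ℤ}

lemma Adm.ddc {p q : ℕ} {c : CC k n m} (h : Sup (Adm d e μ p q) c) : Sup (Adm d e μ (p+1) q) (dd c) := by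
  refine Sup.dA h ?_
  rintro i - ρ T a hi ⟨h1, ⟨i1, h2⟩, ⟨i2, h3⟩, h4, h5, h6⟩
  refine ⟨by rw [Finset.card_insert_of_notMem hi, h1], ⟨i1, by simp [h2]⟩, ⟨i2, by simp [h3]⟩, h4, ?_, h6⟩
  intro j hj; simp [h5 j hj]

lemma Adm.PARc {f : Fin (n+m) → PolyS k n m} (hf : ∀ i, f i ∈ grad k n m ((d : ℤ), (e : ℤ))) {p q : ℕ}
    {c : CC k n m} (h : Sup (Adm d e μ p (q+1)) c) : Sup (Adm d e μ p q) (PAR f c) := by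
  refine Sup.PAR h ?_
  rintro i b hb ρ T a hi ⟨h1, h2, h3, h4, h5, h6⟩
  refine ⟨h1, h2, h3, ?_, ?_, ?_⟩
  · rw [Finset.card_insert_of_notMem hi] at h4; omega
  · intro j hj
    apply h5
    rw [Pi.add_apply, ex_apply] at hj
    omega
  · rw [bdeg_add, bdeg_f hf hb, h6, tdeg_succ]

end Double

section Column
variable {k : Type} [Field k] {n m d e : ℕ} {μ : ℤ × ℤ}

/-- admissibility inside a single column -/
def KAdm (d e : ℕ) (μ : ℤ × ℤ) (ρ : Finset (Ix n m)) (q : ℕ) (T : Finset (Fin (n+m))) (a : Ix n m → ℤ) : Prop :=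
  T.card = q ∧ (∀ i, a i < 0 → i ∈ ρ) ∧ bdeg a = tdeg d e μ q

lemma col_core {f : Fin (n+m) → PolyS k n m} (hf : ∀ i, f i ∈ grad k n m ((d : ℤ), (e : ℤ))) {ρ : Finset (Ix n m)}
    {q : ℕ} {z : KK k n m} (hz : ∀ T a, (z T).coeff a ≠ 0 → KAdm d e μ ρ q T a)
    (E : Ix n m → ℤ) (hE : ∀ i, i ∉ ρ → E i = 0) (w' : Finset (Fin (n+m)) → PolyS k n m) (hw : Conc (q+1) w')
    (hk : ∀ T, toL (kos Fin.val f w' T) = mon E * z T) :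
    ∃ w : KK k n m, (∀ T a, (w T).coeff a ≠ 0 → KAdm d e μ ρ (q+1) T a) ∧ kL f w = z := by
  classical
  let g1 : PolyS k n m →+ LL k n m := (AddMonoidHom.mulLeft (mon (-E))).comp (toL : PolyS k n m →+* LL k n m).toAddMonoidHom
  have g1_apply : ∀ x, g1 x = mon (-E) * toL x := fun x => rfl
  let P' : (Ix n m → ℤ) → Prop := fun a => bdeg a = tdeg d e μ (q+1)
  let P : (Ix n m → ℤ) → Prop := fun a => bdeg a = tdeg d e μ q
  refine ⟨fun T => filt P' (g1 (w' T)), ?_, ?_⟩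
  · intro T a ha
    obtain ⟨h1, h2⟩ := filt_ne ha
    refine ⟨hw T ?_, ?_, h1⟩
    · intro h0; apply h2; rw [h0, map_zero]; rfl
    · intro i hi
      by_contra hρ
      rw [g1_apply, mon_mul_coeff] at h2
      obtain ⟨b, _, hb⟩ := toL_supp _ _ h2
      have := congrFun hb i
      rw [ex_apply, Pi.sub_apply, Pi.neg_apply, hE i hρ] at this
      omega
  · have h1 : kL f (fun T => g1 (w' T)) = z := by
      unfold kL
      rw [kos_comp (f := f) (fun x => toL x) g1 (fun i x => by
        rw [g1_apply, g1_apply, smul_eq_mul, smul_eq_mul, map_mul]; ring)]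
      ext1 T
      rw [g1_apply, hk, ← mul_assoc, mon_mul_mon, neg_add_cancel, mon_zero, one_mul]
    have h2 : kL f (fun T => filt P' (g1 (w' T))) = fun T => filt P (kL f (fun T => g1 (w' T)) T) := by
      unfold kL
      ext1 T
      rw [kos_apply2, kos_apply2, map_sum]
      refine Finset.sum_congr rfl fun i _ => ?_
      rw [smul_eq_mul, smul_eq_mul, filt_mul P' P, ann_comp (filt P') i (fun T => g1 (w' T))]
      intro b hb a
      simp only [P, P', bdeg_add, bdeg_f hf hb]
      rw [← tdeg_succ d e μ q]
      exact add_right_inj _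
    rw [h2, h1]
    ext1 T
    exact filt_self fun a ha => (hz T a ha).2.2

lemma col {f : Fin (n+m) → PolyS k n m} {I : Ideal (PolyS k n m)} (hCI : IsCIPoints k n m d e f I)
    {ρ : Finset (Ix n m)} {q : ℕ} (hq : 1 ≤ q) {z : KK k n m} (hz : ∀ T a, (z T).coeff a ≠ 0 → KAdm d e μ ρ q T a)
    (hkz : kL f z = 0) {i : Fin (n+1)} {j : Fin (m+1)} (hi : Sum.inl i ∈ ρ) (hj : Sum.inr j ∈ ρ) :
    ∃ w : KK k n m, (∀ T a, (w T).coeff a ≠ 0 → KAdm d e μ ρ (q+1) T a) ∧ kL f w = z := by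
  classical
  -- bound on the negative exponents
  obtain ⟨l, hl⟩ : ∃ l : ℤ, ∀ T a, (z T).coeff a ≠ 0 → ∀ v, 0 ≤ a v + l := by
    have hfin : (⋃ T : Finset (Fin (n+m)), ⋃ v : Ix n m, (fun a : Ix n m → ℤ => - a v) '' ((z T).coeff.support : Set (Ix n m → ℤ))).Finite :=
      Set.finite_iUnion fun T => Set.finite_iUnion fun v => (Finset.finite_toSet _).image _
    obtain ⟨l, hl⟩ := hfin.bddAbove
    refine ⟨l, fun T a ha v => ?_⟩
    have : - a v ≤ l := hl (Set.mem_iUnion.2 ⟨T, Set.mem_iUnion.2 ⟨v, ⟨a, by simpa using ha, rfl⟩⟩⟩)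
    omega
  let L1 : Ix n m → ℤ := fun v => if v ∈ ρ then l else 0
  have hpull : ∀ T, ∃ p : PolyS k n m, toL p = mon L1 * z T := by
    intro T
    apply exists_toL
    intro a ha v
    rw [mon_mul_coeff] at ha
    have h1 := hl T _ ha v
    have h2 := (hz T _ ha).2.1 v
    simp only [Pi.sub_apply, L1] at h1 h2
    by_cases hv : v ∈ ρ
    · simp only [hv, if_true] at h1; omega
    · simp only [hv, if_false] at h2; by_contra hc; exact h2 (by omega)
  choose zp hzp using hpull
  have hconc : Conc q zp := by
    intro T hT
    have h1 : toL (zp T) ≠ 0 := fun h => hT (toL_inj (by rw [h, map_zero]))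
    have h2 : z T ≠ 0 := by intro h; apply h1; rw [hzp, h, mul_zero]
    have : ∃ a, (z T).coeff a ≠ 0 := by
      by_contra hc; push Not at hc; apply h2; ext a; exact hc a
    obtain ⟨a, ha⟩ := this
    exact (hz T a ha).1
  have hk0 : kos Fin.val f zp = 0 := by
    ext1 T
    apply toL_inj
    have h1 := congrFun (kos_comp (r := Fin.val) (f := f) (fun x => toL x)
      (toL : PolyS k n m →+* LL k n m).toAddMonoidHom (fun i x => by
        change toL (f i • x) = _; rw [smul_eq_mul, map_mul]; rfl) zp) T
    have h2 : (fun T => (toL : PolyS k n m →+* LL k n m).toAddMonoidHom (zp T)) = (mon L1 : LL k n m) • z := by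
      ext1 T; exact hzp T
    rw [h2, kos_smul] at h1
    have h3 : kos Fin.val (fun i => toL (f i)) z = 0 := hkz
    rw [h3, smul_zero] at h1
    change 0 = toL _ at h1
    rw [← h1]; exact (map_zero _).symm
  obtain ⟨s, w', hw1, hw2⟩ := kos_local hCI i j q hq zp hconc hk0
  let E2 : Ix n m → ℤ := ex (s • (Finsupp.single (Sum.inl i) 1 + Finsupp.single (Sum.inr j) 1))
  refine col_core hCI.1 hz (E2 + L1) ?_ w' hw1 ?_
  · intro v hv
    have h1 : v ≠ Sum.inl i := by rintro rfl; exact hv hi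
    have h2 : v ≠ Sum.inr j := by rintro rfl; exact hv hj
    simp [E2, L1, hv, ex_apply, Finsupp.single_apply, h1.symm, h2.symm]
  · intro T
    have hX : toL ((X (Sum.inl i) * X (Sum.inr j) : PolyS k n m)^s) = mon E2 := by
      have : ((X (Sum.inl i) * X (Sum.inr j) : PolyS k n m)^s) = monomial (s • (Finsupp.single (Sum.inl i) 1 + Finsupp.single (Sum.inr j) 1)) 1 := by
        rw [X, X, monomial_mul, monomial_pow]; simp
      rw [this, toL_monomial]; rfl
    rw [hw2, Pi.smul_apply, smul_eq_mul, map_mul, hX, hzp, ← mul_assoc, mon_mul_mon]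

lemma column {f : Fin (n+m) → PolyS k n m} {I : Ideal (PolyS k n m)} (hCI : IsCIPoints k n m d e f I)
    {p q : ℕ} (hq : 1 ≤ q) {c : CC k n m} (hc : Sup (Adm d e μ p q) c) (h0 : PAR f c = 0) :
    ∃ c', Sup (Adm d e μ p (q+1)) c' ∧ PAR f c' = c := by
  classical
  have : ∀ ρ, ∃ w : KK k n m, (∀ T a, (w T).coeff a ≠ 0 → Adm d e μ p (q+1) ρ T a) ∧ kL f w = c ρ := by
    intro ρ
    by_cases h : ∃ T a, (c ρ T).coeff a ≠ 0
    · obtain ⟨T, a, h⟩ := h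
      obtain ⟨h1, ⟨i, hi⟩, ⟨j, hj⟩, h4, h5, h6⟩ := hc ρ T a h
      obtain ⟨w, hw1, hw2⟩ := col hCI hq (μ := μ) (ρ := ρ) (z := c ρ) (fun T a hT => (hc ρ T a hT).2.2.2) (congrFun h0 ρ) hi hj
      exact ⟨w, fun T a hT => ⟨h1, ⟨i, hi⟩, ⟨j, hj⟩, hw1 T a hT⟩, hw2⟩
    · push Not at h
      refine ⟨0, fun T a hT => absurd rfl hT, ?_⟩
      rw [map_zero]; ext T a; exact (h T a).symm
  choose w hw1 hw2 using this
  exact ⟨w, fun ρ T a h => hw1 ρ T a h, funext hw2⟩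

end Column

section Row
variable {k : Type} [Field k] {n m d e : ℕ} {μ : ℤ × ℤ}

/-- negative set of an exponent -/
def negs (a : Ix n m → ℤ) : Finset (Ix n m) := Finset.univ.filter fun i => a i < 0

lemma mem_negs {a : Ix n m → ℤ} {i} : i ∈ negs a ↔ a i < 0 := by simp [negs]

def filtN (N : Finset (Ix n m)) : CC k n m →+ CC k n m :=
  ((filt (k := k) fun a : Ix n m → ℤ => negs a = N).compLeft (Finset (Fin (n+m)))).compLeft (Finset (Ix n m))

lemma filtN_apply (N : Finset (Ix n m)) (c : CC k n m) (ρ T) :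
    filtN N c ρ T = filt (fun a : Ix n m → ℤ => negs a = N) (c ρ T) := rfl

lemma filtN_dd (N : Finset (Ix n m)) (c : CC k n m) : dd (filtN N c) = filtN N (dd c) :=
  dA_comp (r := rk n m) ((filt (k := k) fun a : Ix n m → ℤ => negs a = N).compLeft (Finset (Fin (n+m)))) Finset.univ c

lemma sum_filtN (c : CC k n m) : ∑ N, filtN N c = c := by
  ext ρ T a
  rw [Finset.sum_apply, Finset.sum_apply, AddMonoidAlgebra.coeff_sum, Finsupp.finset_sum_apply,
    Finset.sum_eq_single (negs a)]
  · rw [filtN_apply, filt_pos (P := fun a' : Ix n m → ℤ => negs a' = negs a) rfl]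
  · intro N _ hN
    rw [filtN_apply, filt_neg (P := fun a' : Ix n m → ℤ => negs a' = N) (Ne.symm hN)]
  · simp

lemma filtN_sup {Q : Finset (Ix n m) → Finset (Fin (n+m)) → (Ix n m → ℤ) → Prop} {c : CC k n m} (h : Sup Q c)
    (N : Finset (Ix n m)) : Sup (fun ρ T a => Q ρ T a ∧ negs a = N) (filtN N c) := by
  intro ρ T a hc
  rw [filtN_apply] at hc
  obtain ⟨h1, h2⟩ := filt_ne hc
  exact ⟨h _ _ _ h2, h1⟩

lemma rowN {p q : ℕ} {N : Finset (Ix n m)} {z : CC k n m}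
    (hz : Sup (fun ρ T a => Adm d e μ (p+1) q ρ T a ∧ negs a = N) z) (h0 : dd z = 0) (i0 : Ix n m) (hi0 : i0 ∉ N)
    (hm : ∀ ρ T a, i0 ∉ ρ → Adm d e μ (p+1) q (insert i0 ρ) T a → negs a = N →
      (∃ i, Sum.inl i ∈ ρ) ∧ (∃ j, Sum.inr j ∈ ρ)) :
    ∃ w, Sup (Adm d e μ p q) w ∧ z = dd w := by
  refine ⟨ann (rk n m) i0 z, Sup.ann hz ?_, ?_⟩
  · rintro ρ T a hi ⟨hA, hN⟩
    obtain ⟨h1, h2⟩ := hm ρ T a hi hA hN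
    obtain ⟨h3, _, _, h4, h5, h6⟩ := hA
    rw [Finset.card_insert_of_notMem hi] at h3
    refine ⟨by omega, h1, h2, h4, ?_, h6⟩
    intro j hj
    rcases Finset.mem_insert.1 (h5 j hj) with h | h
    · subst h; exact absurd (hN ▸ mem_negs.2 hj) hi0
    · exact h
  · have := ann_dA (rk_inj n m) (Finset.mem_univ i0) z
    change ann (rk n m) i0 (dd z) + dd _ = z at this
    rw [h0, map_zero, zero_add] at this
    exact this.symm

/-- admissibility for the corner part -/
def VAdm (d e : ℕ) (μ : ℤ × ℤ) (p q : ℕ) (ρ : Finset (Ix n m)) (T : Finset (Fin (n+m))) (a : Ix n m → ℤ) : Prop :=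
  (∀ i, Sum.inl i ∉ ρ) ∧ ρ.card = p ∧ T.card = q ∧ (∀ i, 0 ≤ a i) ∧ bdeg a = tdeg d e μ q

lemma row0 {p q : ℕ} {z : CC k n m}
    (hz : Sup (fun ρ T a => Adm d e μ (p+1) q ρ T a ∧ negs a = ∅) z) (h0 : dd z = 0) :
    ∃ w v, Sup (Adm d e μ p q) w ∧ Sup (VAdm d e μ p q) v ∧ z = dd w + dX (dY v) := by
  classical
  have hneg : ∀ a : Ix n m → ℤ, negs a = ∅ → ∀ i, 0 ≤ a i := by
    intro a ha i
    by_contra hc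
    have : i ∈ negs a := mem_negs.2 (by omega)
    rw [ha] at this; simp at this
  set y := ann (rk n m) (Sum.inl 0) z with hy
  have hdy : dd y = z := by
    have := ann_dA (rk_inj n m) (Finset.mem_univ (Sum.inl 0)) z
    change ann (rk n m) (Sum.inl 0) (dd z) + dd _ = z at this
    rwa [h0, map_zero, zero_add] at this
  have hys : Sup (fun ρ T a => ρ.card = p + 1 ∧ (∃ j, Sum.inr j ∈ ρ) ∧ T.card = q ∧ (∀ i, 0 ≤ a i) ∧ bdeg a = tdeg d e μ q) y := by
    refine Sup.ann hz ?_
    rintro ρ T a hi ⟨⟨h1, h2, ⟨j, h3⟩, h4, h5, h6⟩, hN⟩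
    rw [Finset.card_insert_of_notMem hi] at h1
    exact ⟨by omega, ⟨j, by simpa using h3⟩, h4, hneg a hN, h6⟩
  let w0 : CC k n m := fun ρ => if ∃ i, Sum.inl i ∈ ρ then y ρ else 0
  let u : CC k n m := fun ρ => if ∃ i, Sum.inl i ∈ ρ then 0 else y ρ
  have hyw : y = w0 + u := by
    ext1 ρ
    rw [Pi.add_apply]; simp only [w0, u]
    split_ifs <;> simp
  have hw0 : Sup (Adm d e μ p q) w0 := by
    intro ρ T a h
    simp only [w0] at h
    split_ifs at h with hi
    · obtain ⟨h1, h2, h3, h4, h5⟩ := hys _ _ _ h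
      exact ⟨h1, hi, h2, h3, fun i hi => absurd (h4 i) (by omega), h5⟩
    · exact absurd rfl h
  have hu : Sup (fun ρ T a => (∀ i, Sum.inl i ∉ ρ) ∧ ρ.card = p + 1 ∧ T.card = q ∧ (∀ i, 0 ≤ a i) ∧ bdeg a = tdeg d e μ q) u := by
    intro ρ T a h
    simp only [u] at h
    split_ifs at h with hi
    · exact absurd rfl h
    · obtain ⟨h1, h2, h3, h4, h5⟩ := hys _ _ _ h
      exact ⟨not_exists.1 hi, h1, h3, h4, h5⟩
  have e1 : z = dd w0 + (dX u + dY u) := by rw [← dd_eq, ← map_add, ← hyw, hdy]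
  have hdYu : dY u = 0 := by
    have s1 : Sup (fun ρ _ _ => ∀ i, Sum.inl i ∉ ρ) (dY u) := by
      refine Sup.dA hu ?_
      rintro i hi ρ T a _ ⟨h, _⟩ i'
      obtain ⟨j, rfl⟩ := mem_Ys.1 hi
      simp [h i']
    have s2 : Sup (fun ρ _ _ => ∃ i, Sum.inl i ∈ ρ) (dY u) := by
      have : dY u = z - dd w0 - dX u := by rw [e1]; abel
      rw [this]
      refine Sup.sub (Sup.sub (hz.mono fun ρ T a h => h.1.2.1) ((Adm.ddc hw0).mono fun ρ T a h => h.2.1)) ?_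
      refine Sup.dA hu ?_
      rintro i hi ρ T a _ _
      obtain ⟨j, rfl⟩ := mem_Xs.1 hi
      exact ⟨j, by simp⟩
    ext ρ T a
    by_contra hc
    obtain ⟨i, hi⟩ := s2 _ _ _ hc
    exact s1 _ _ _ hc i hi
  refine ⟨w0, ann (rk n m) (Sum.inr 0) u, hw0, Sup.ann hu ?_, ?_⟩
  · rintro ρ T a hi ⟨h1, h2, h3, h4, h5⟩
    rw [Finset.card_insert_of_notMem hi] at h2
    exact ⟨fun i h => h1 i (by simp [h]), by omega, h3, h4, h5⟩
  · have := ann_dA (rk_inj n m) (mem_Ys.2 ⟨0, rfl⟩) u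
    change ann (rk n m) (Sum.inr 0) (dY u) + dY _ = u at this
    rw [hdYu, map_zero, zero_add] at this
    rw [this]
    conv_lhs => rw [e1, hdYu, add_zero]

lemma exists_notMem_of_ne_univ {N : Finset (Ix n m)} (h : N ≠ Finset.univ) : ∃ i, i ∉ N := by
  by_contra hc; push Not at hc; exact h (Finset.eq_univ_iff_forall.2 hc)

lemma row (hμ : μ ∉ GammaSet n m d e 1) {p : ℕ} {z : CC k n m}
    (hz : Sup (Adm d e μ (p+1) (p+1)) z) (h0 : dd z = 0) :
    ∃ w v, Sup (Adm d e μ p (p+1)) w ∧ Sup (VAdm d e μ p (p+1)) v ∧ z = dd w + dX (dY v) := by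
  classical
  have key : ∀ N : Finset (Ix n m), ∃ w v, Sup (Adm d e μ p (p+1)) w ∧ Sup (VAdm d e μ p (p+1)) v ∧
      filtN N z = dd w + dX (dY v) := by
    intro N
    have hzN := filtN_sup hz N
    have h0N : dd (filtN N z) = 0 := by rw [filtN_dd, h0, map_zero]
    by_cases hN0 : N = ∅
    · subst hN0; exact row0 hzN h0N
    suffices h : ∃ w, Sup (Adm d e μ p (p+1)) w ∧ filtN N z = dd w by
      obtain ⟨w, h1, h2⟩ := h
      exact ⟨w, 0, h1, Sup.zero, by rw [h2, map_zero, map_zero, add_zero]⟩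
    have hTc : ∀ T : Finset (Fin (n+m)), T.card ≤ n + m := fun T => by
      simpa using Finset.card_le_univ T
    by_cases hNu : N = Finset.univ
    · refine ⟨0, Sup.zero, ?_⟩
      rw [map_zero]
      refine hzN.eq_zero ?_
      rintro ρ T a ⟨⟨h1, _, _, h4, h5, _⟩, hN⟩
      have : ρ = Finset.univ := Finset.eq_univ_iff_forall.2 fun i => h5 i (mem_negs.1 (by rw [hN, hNu]; simp))
      rw [this, Finset.card_univ, Fintype.card_sum, Fintype.card_fin, Fintype.card_fin] at h1
      have := hTc T
      omega
    have hsub : ∀ {i0 : Ix n m} {ρ T a}, i0 ∉ N → Adm d e μ (p+1) (p+1) (insert i0 ρ) T a → negs a = N → ∀ v ∈ N, v ∈ ρ := by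
      rintro i0 ρ T a hi hA rfl v hv
      rcases Finset.mem_insert.1 (hA.2.2.2.2.1 v (mem_negs.1 hv)) with h | h
      · subst h; exact absurd hv hi
      · exact h
    by_cases hX : ∃ i, Sum.inl i ∈ N
    · obtain ⟨i1, hi1⟩ := hX
      by_cases hY : ∃ j, Sum.inr j ∈ N
      · obtain ⟨j1, hj1⟩ := hY
        obtain ⟨i0, hi0⟩ := exists_notMem_of_ne_univ hNu
        exact rowN hzN h0N i0 hi0 fun ρ T a _ hA hN => ⟨⟨i1, hsub hi0 hA hN _ hi1⟩, ⟨j1, hsub hi0 hA hN _ hj1⟩⟩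
      · push Not at hY
        by_cases hXf : ∃ i, Sum.inl i ∉ N
        · obtain ⟨i0, hi0⟩ := hXf
          refine rowN hzN h0N _ hi0 fun ρ T a _ hA hN => ⟨⟨i1, hsub hi0 hA hN _ hi1⟩, ?_⟩
          obtain ⟨j, hj⟩ := hA.2.2.1
          exact ⟨j, by simpa using hj⟩
        · push Not at hXf
          refine rowN hzN h0N _ (hY 0) fun ρ T a hρ hA hN => ⟨⟨i1, hsub (hY 0) hA hN _ hi1⟩, ?_⟩
          by_contra hc
          push Not at hc
          have hρX : ρ = Xs n m := by
            ext v
            rw [mem_Xs]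
            constructor
            · intro hv
              rcases v with i | j
              · exact ⟨i, rfl⟩
              · exact absurd hv (hc j)
            · rintro ⟨i, rfl⟩; exact hsub (hY 0) hA hN _ (hXf i)
          obtain ⟨h1, _, _, h4, h5, h6⟩ := hA
          rw [Finset.card_insert_of_notMem hρ, hρX, Xs, Finset.card_map, Finset.card_univ, Fintype.card_fin] at h1
          have hp : p = n := by omega
          subst hp
          have hT := hTc T
          have hs1 : ∑ i, a (Sum.inl i) ≤ ∑ i : Fin (p+1), (-1 : ℤ) := Finset.sum_le_sum fun i _ => by
            have : a (Sum.inl i) < 0 := mem_negs.1 (hN ▸ hXf i)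
            omega
          have hs2 : 0 ≤ ∑ j, a (Sum.inr j) := Finset.sum_nonneg fun j _ => by
            by_contra hh
            exact hY j (hN ▸ mem_negs.2 (by omega))
          have e1 := congrArg Prod.fst h6
          have e2 := congrArg Prod.snd h6
          simp only [bdeg, tdeg] at e1 e2
          rw [e1] at hs1; rw [e2] at hs2
          simp at hs1
          push_cast at hs2
          apply hμ
          left
          refine ⟨by positivity, by omega, ?_, ?_⟩ <;> linarith
    · push Not at hX
      have hY : ∃ j, Sum.inr j ∈ N := by
        obtain ⟨v, hv⟩ := Finset.nonempty_iff_ne_empty.2 hN0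
        rcases v with i | j
        · exact absurd hv (hX i)
        · exact ⟨j, hv⟩
      obtain ⟨j1, hj1⟩ := hY
      by_cases hYf : ∃ j, Sum.inr j ∉ N
      · obtain ⟨i0, hi0⟩ := hYf
        refine rowN hzN h0N _ hi0 fun ρ T a _ hA hN => ⟨?_, ⟨j1, hsub hi0 hA hN _ hj1⟩⟩
        obtain ⟨j, hj⟩ := hA.2.1
        exact ⟨j, by simpa using hj⟩
      · push Not at hYf
        refine rowN hzN h0N _ (hX 0) fun ρ T a hρ hA hN => ⟨?_, ⟨j1, hsub (hX 0) hA hN _ hj1⟩⟩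
        by_contra hc
        push Not at hc
        have hρY : ρ = Ys n m := by
          ext v
          rw [mem_Ys]
          constructor
          · intro hv
            rcases v with i | j
            · exact absurd hv (hc i)
            · exact ⟨j, rfl⟩
          · rintro ⟨i, rfl⟩; exact hsub (hX 0) hA hN _ (hYf i)
        obtain ⟨h1, _, _, h4, h5, h6⟩ := hA
        rw [Finset.card_insert_of_notMem hρ, hρY, Ys, Finset.card_map, Finset.card_univ, Fintype.card_fin] at h1
        have hp : p = m := by omega
        subst hp
        have hT := hTc T
        have hs1 : ∑ i, a (Sum.inr i) ≤ ∑ i : Fin (p+1), (-1 : ℤ) := Finset.sum_le_sum fun i _ => by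
          have : a (Sum.inr i) < 0 := mem_negs.1 (hN ▸ hYf i)
          omega
        have hs2 : 0 ≤ ∑ j, a (Sum.inl j) := Finset.sum_nonneg fun j _ => by
          by_contra hh
          exact hX j (hN ▸ mem_negs.2 (by omega))
        have e1 := congrArg Prod.fst h6
        have e2 := congrArg Prod.snd h6
        simp only [bdeg, tdeg] at e1 e2
        rw [e2] at hs1; rw [e1] at hs2
        simp at hs1
        push_cast at hs2
        apply hμ
        right
        refine ⟨by positivity, by omega, ?_, ?_⟩ <;> linarith
  choose w v hw hv hwv using key
  refine ⟨∑ N, w N, ∑ N, v N, Sup.sum fun N _ => hw N, Sup.sum fun N _ => hv N, ?_⟩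
  rw [map_sum, map_sum, map_sum, ← Finset.sum_add_distrib]
  conv_lhs => rw [← sum_filtN z]
  exact Finset.sum_congr rfl fun N _ => hwv N

/-- row exactness away from the corner -/
lemma row_pos (hμ : μ ∉ GammaSet n m d e 1) {p : ℕ} (hp : 1 ≤ p) {z : CC k n m}
    (hz : Sup (Adm d e μ (p+1) (p+1)) z) (h0 : dd z = 0) : ∃ w, Sup (Adm d e μ p (p+1)) w ∧ z = dd w := by
  obtain ⟨w, v, hw, hv, h⟩ := row hμ hz h0
  refine ⟨w - dX v, hw.sub (Sup.dA hv ?_), ?_⟩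
  · rintro i hi ρ T a hρ ⟨h1, h2, h3, h4, h5⟩
    obtain ⟨i, rfl⟩ := mem_Xs.1 hi
    refine ⟨by rw [Finset.card_insert_of_notMem hρ, h2], ⟨i, by simp⟩, ?_, h3, fun j hj => absurd (h4 j) (by omega), h5⟩
    obtain ⟨x, hx⟩ := Finset.card_pos.1 (by omega : 0 < ρ.card)
    rcases x with x | x
    · exact absurd hx (h1 x)
    · exact ⟨x, by simp [hx]⟩
  · rw [h, map_sub, dd_dX, sub_neg_eq_add]

end Row

section Claim
variable {k : Type} [Field k] {n m d e : ℕ} {μ : ℤ × ℤ}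

lemma claim {f : Fin (n+m) → PolyS k n m} {I : Ideal (PolyS k n m)} (hCI : IsCIPoints k n m d e f I)
    (hμ : μ ∉ GammaSet n m d e 1) (s : ℕ) : ∀ (r : ℕ), n + m ≤ r + s → ∀ (c : CC k n m), Sup (Adm d e μ (r+1) (r+1)) c →
      PAR f (dd c) = 0 → ∃ u, Sup (Adm d e μ (r+1) (r+2)) u ∧ dd (c - PAR f u) = 0 := by
  induction s with
  | zero =>
    intro r hr c hc _
    refine ⟨0, Sup.zero, ?_⟩
    have : c = 0 := hc.eq_zero fun ρ T a h => by
      have h1 := h.2.2.2.1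
      have h2 : T.card ≤ n + m := by simpa using Finset.card_le_univ T
      omega
    rw [this, map_zero, sub_zero, map_zero]
  | succ s ih =>
    intro r hr c hc h0
    obtain ⟨c', hc', hcc⟩ := column hCI (by omega) (Adm.ddc hc) h0
    have h1 : PAR f (dd c') = 0 := by rw [PAR_dd, hcc, dd_dd]
    obtain ⟨u', hu', h2⟩ := ih (r+1) (by omega) c' hc' h1
    obtain ⟨w, hw, h3⟩ := row_pos hμ (by omega) (hc'.sub (Adm.PARc hCI.1 hu')) h2
    refine ⟨w, hw, ?_⟩
    rw [map_sub, ← PAR_dd, ← h3, map_sub, PAR_PAR, sub_zero, hcc, sub_self]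

lemma claim1 {f : Fin (n+m) → PolyS k n m} {I : Ideal (PolyS k n m)} (hCI : IsCIPoints k n m d e f I)
    (hμ : μ ∉ GammaSet n m d e 1) {c : CC k n m} (hc : Sup (Adm d e μ 1 1) c)
    (h0 : PAR f (dd c) = 0) : ∃ u v, Sup (VAdm d e μ 0 1) v ∧ c = dX (dY v) + PAR f u := by
  obtain ⟨u, hu, h1⟩ := claim hCI hμ (n+m) 0 (by omega) c hc h0
  obtain ⟨w, v, hw, hv, h2⟩ := row hμ (hc.sub (Adm.PARc hCI.1 hu)) h1
  have hw0 : w = 0 := hw.eq_zero fun ρ T a h => by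
    obtain ⟨h1, ⟨i, hi⟩, ⟨j, hj⟩, _⟩ := h
    obtain ⟨x, hx⟩ := Finset.card_eq_one.1 h1
    rw [hx, Finset.mem_singleton] at hi hj
    rw [← hi] at hj
    cases hj
  refine ⟨u, v, hv, ?_⟩
  rw [hw0, map_zero, zero_add] at h2
  rw [← h2]; abel

/-- concentrated at the empty set -/
def del (g : KK k n m) : CC k n m := fun ρ => if ρ = ∅ then g else 0

lemma ann_del (i : Ix n m) (g : KK k n m) : ann (rk n m) i (del g) = 0 := by
  ext1 ρ
  by_contra h
  obtain ⟨_, h2⟩ := ann_ne_zero h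
  exact h2 (if_neg (by simp))

lemma ann_dY_del (i : Fin (n+1)) (g : KK k n m) : ann (rk n m) (Sum.inl i) (dY (del g)) = 0 := by
  ext1 ρ
  by_contra h
  obtain ⟨h1, h2⟩ := ann_ne_zero h
  obtain ⟨j, hj, T, h3, h4, h5⟩ := dA_ne_zero h2
  obtain ⟨j, rfl⟩ := mem_Ys.1 hj
  have hT : T = ∅ := by by_contra hT; exact h5 (if_neg hT)
  have : Sum.inl i ∈ insert (Sum.inr j) T := h4 ▸ Finset.mem_insert_self _ _
  rw [hT] at this
  simp at this

lemma eps_inj {g : KK k n m} (h : dX (dY (del g)) = 0) : g = 0 := by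
  have h1 := ann_dA (rk_inj n m) (mem_Xs.2 ⟨0, rfl⟩) (dY (del g))
  change ann (rk n m) (Sum.inl 0) (dX (dY (del g))) + dX _ = _ at h1
  rw [h, ann_dY_del, map_zero, map_zero, add_zero] at h1
  have h2 := ann_dA (rk_inj n m) (mem_Ys.2 ⟨0, rfl⟩) (del g)
  change ann (rk n m) (Sum.inr 0) (dY (del g)) + dY _ = _ at h2
  rw [← h1, ann_del, map_zero, map_zero, add_zero] at h2
  exact (congrFun h2 ∅).symm.trans rfl

lemma VAdm_del {q : ℕ} {v : CC k n m} (h : Sup (VAdm d e μ 0 q) v) : v = del (v ∅) := by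
  ext1 ρ
  by_cases hρ : ρ = ∅
  · subst hρ; exact (if_pos rfl).symm
  · refine Eq.trans ?_ (if_neg hρ).symm
    ext T a
    by_contra hc
    exact hρ (Finset.card_eq_zero.1 (h _ _ _ hc).2.1)

lemma PAR_del (f : Fin (n+m) → PolyS k n m) (g : KK k n m) : PAR f (del g) = del (kL f g) := by
  ext1 ρ
  rw [PAR_apply]; unfold del
  split_ifs <;> simp

/-- integer multiples: the augmentation has integer coefficients -/
lemma eps_int : ∃ N : Finset (Ix n m) → ℤ, (∀ ρ, N ρ ≠ 0 → ρ.card = 2 ∧ (∃ i, Sum.inl i ∈ ρ) ∧ (∃ j, Sum.inr j ∈ ρ)) ∧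
    ∀ g : KK k n m, dX (dY (del g)) = fun ρ => N ρ • g := by
  classical
  let δ : Finset (Ix n m) → ℤ := fun ρ => if ρ = ∅ then 1 else 0
  refine ⟨dA (rk n m) (Xs n m) (dA (rk n m) (Ys n m) δ), ?_, ?_⟩
  · intro ρ h
    obtain ⟨i, hi, T, h1, rfl, h2⟩ := dA_ne_zero h
    obtain ⟨j, hj, T, h3, rfl, h4⟩ := dA_ne_zero h2
    have hT : T = ∅ := by by_contra hT; exact h4 (if_neg hT)
    obtain ⟨i, rfl⟩ := mem_Xs.1 hi
    obtain ⟨j, rfl⟩ := mem_Ys.1 hj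
    subst hT
    exact ⟨by rw [Finset.card_insert_of_notMem h1]; simp, ⟨i, by simp⟩, ⟨j, by simp⟩⟩
  · intro g
    have h1 : del g = fun ρ => zmultiplesHom (KK k n m) g (δ ρ) := by
      ext1 ρ; simp only [del, δ]; split_ifs <;> simp
    unfold dX dY
    rw [h1, dA_comp (zmultiplesHom (KK k n m) g), dA_comp (zmultiplesHom (KK k n m) g)]
    rfl

theorem sat_sub {f : Fin (n+m) → PolyS k n m} {I : Ideal (PolyS k n m)} (hCI : IsCIPoints k n m d e f I)
    (hμ : μ ∉ GammaSet n m d e 1) {g : PolyS k n m} (hg : g ∈ satIdeal I (Birr k n m)) (hgμ : g ∈ grad k n m μ) :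
    g ∈ I := by
  classical
  let G0 : Finset (Fin (n+m)) → PolyS k n m := fun T => if T = ∅ then g else 0
  let G : KK k n m := fun T => toL (G0 T)
  have hG : ∀ (ρ : Finset (Ix n m)) T a, (G T).coeff a ≠ 0 → KAdm d e μ ρ 0 T a := by
    intro ρ T a h
    simp only [G, G0] at h
    split_ifs at h with hT
    · obtain ⟨b, hb, rfl⟩ := toL_supp _ _ h
      refine ⟨by rw [hT]; rfl, fun i hi => ?_, ?_⟩
      · rw [ex_apply] at hi; omega
      · rw [bdeg_ex]
        have : Finsupp.weight (wt n m) b = μ := hgμ (mem_support_iff.1 hb)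
        rw [this]; simp [tdeg]
    · rw [map_zero] at h; exact absurd rfl h
  have hloc : ∀ ρ : Finset (Ix n m), (∃ i, Sum.inl i ∈ ρ) ∧ (∃ j, Sum.inr j ∈ ρ) →
      ∃ w : KK k n m, (∀ T a, (w T).coeff a ≠ 0 → KAdm d e μ ρ 1 T a) ∧ kL f w = G := by
    rintro ρ ⟨⟨i, hi⟩, ⟨j, hj⟩⟩
    obtain ⟨t, ht⟩ := sat_pow hg (XX_mem i j)
    rw [hCI.2.1] at ht
    obtain ⟨a, ha⟩ := (Ideal.mem_span_range_iff_exists_fun).1 ht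
    let E2 : Ix n m → ℤ := ex (t • (Finsupp.single (Sum.inl i) 1 + Finsupp.single (Sum.inr j) 1))
    have hX : toL ((X (Sum.inl i) * X (Sum.inr j) : PolyS k n m)^t) = mon E2 := by
      have : ((X (Sum.inl i) * X (Sum.inr j) : PolyS k n m)^t) = monomial (t • (Finsupp.single (Sum.inl i) 1 + Finsupp.single (Sum.inr j) 1)) 1 := by
        rw [X, X, monomial_mul, monomial_pow]; simp
      rw [this, toL_monomial]; rfl
    let δ : Finset (Fin (n+m)) → PolyS k n m := fun T => if T = ∅ then 1 else 0
    have hδ : Conc 0 δ := by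
      intro T hT
      have : T = ∅ := by by_contra h; exact hT (if_neg h)
      rw [this]; rfl
    have hkδ : kos Fin.val f δ = 0 := by
      ext1 T
      by_contra h
      obtain ⟨i, _, h⟩ := kos_ne_zero h
      apply h
      simp [δ]
    refine col_core hCI.1 (hG ρ) E2 ?_ (hkos Fin.val a δ) (hδ.hkos a) ?_
    · intro v hv
      have h1 : v ≠ Sum.inl i := by rintro rfl; exact hv hi
      have h2 : v ≠ Sum.inr j := by rintro rfl; exact hv hj
      simp [E2, ex_apply, Finsupp.single_apply, h1.symm, h2.symm]
    · intro T
      have := kos_hkos (f := f) Fin.val_injective a δ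
      rw [hkδ, map_zero, add_zero, ha] at this
      rw [this, ← hX]
      simp only [G, G0, δ, Pi.smul_apply, smul_eq_mul, ← map_mul]
      congr 1
      split_ifs <;> simp
  obtain ⟨N, hN1, hN2⟩ := eps_int (k := k) (n := n) (m := m)
  have hw : ∀ ρ, ∃ w : KK k n m, (∀ T a, (N ρ • w T).coeff a ≠ 0 → Adm d e μ 1 1 ρ T a) ∧ N ρ • kL f w = N ρ • G := by
    intro ρ
    by_cases h : N ρ = 0
    · refine ⟨0, fun T a hT => ?_, by rw [h, zero_smul, zero_smul]⟩
      rw [h, zero_smul] at hT; exact absurd rfl hT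
    · obtain ⟨h1, h2, h3⟩ := hN1 ρ h
      obtain ⟨w, hw1, hw2⟩ := hloc ρ ⟨h2, h3⟩
      refine ⟨w, fun T a hT => ⟨h1, h2, h3, hw1 T a ?_⟩, by rw [hw2]⟩
      intro h0
      apply hT
      change evc a (N ρ • w T) = 0
      rw [map_zsmul]
      change N ρ • (w T).coeff a = 0
      rw [h0, smul_zero]
  choose w hw1 hw2 using hw
  let h1 : CC k n m := fun ρ => N ρ • w ρ
  have hh1 : Sup (Adm d e μ 1 1) h1 := fun ρ T a h => hw1 ρ T a h
  have hP : PAR f h1 = dX (dY (del G)) := by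
    rw [hN2]; ext1 ρ
    rw [PAR_apply]; simp only [h1]; rw [map_zsmul, hw2]
  obtain ⟨u, v, hv, huv⟩ := claim1 hCI hμ hh1 (by rw [PAR_dd, hP, dd_dX_dY])
  have e1 : dX (dY (del G)) = dX (dY (del (kL f (v ∅)))) := by
    rw [← hP, huv, map_add, PAR_PAR, add_zero, PAR_dX, PAR_dY, ← PAR_del, ← VAdm_del hv]
  have hdel : del (G - kL f (v ∅)) = del G - del (kL f (v ∅)) := by
    ext1 ρ; simp only [del, Pi.sub_apply]; split_ifs <;> simp
  have e2 : G = kL f (v ∅) := by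
    rw [← sub_eq_zero]
    apply eps_inj
    rw [hdel, map_sub, map_sub, e1, sub_self]
  have hpull : ∀ T, ∃ p : PolyS k n m, toL p = v ∅ T := fun T =>
    exists_toL _ fun a ha => (hv _ _ _ ha).2.2.2.1
  choose vp hvp using hpull
  have e3 : toL g = toL (kos Fin.val f vp ∅) := by
    have h1 := congrFun (kos_comp (r := Fin.val) (f := f) (fun x => toL x)
      (toL : PolyS k n m →+* LL k n m).toAddMonoidHom (fun i x => by
        change toL (f i • x) = _; rw [smul_eq_mul, map_mul]; rfl) vp) ∅
    have h2 : (fun T => (toL : PolyS k n m →+* LL k n m).toAddMonoidHom (vp T)) = v ∅ := by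
      ext1 T; exact hvp T
    rw [h2] at h1
    refine Eq.trans ?_ h1
    exact Eq.trans (by simp [G, G0]) (congrFun e2 ∅)
  rw [toL_inj e3, kos_apply2, hCI.2.1]
  refine Ideal.sum_mem _ fun i _ => ?_
  rw [smul_eq_mul]
  exact Ideal.mul_mem_right _ _ (Ideal.subset_span ⟨i, rfl⟩)

end Claim

section Final

lemma le_sat {k : Type} [Field k] {n m : ℕ} (I C : Ideal (PolyS k n m)) : I ≤ satIdeal I C := by
  refine le_trans ?_ (le_iSup (fun t : ℕ => Submodule.colon I ((C : Set (PolyS k n m)) ^ t)) 0)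
  intro x hx
  rw [Submodule.mem_colon]
  intro p _
  exact Ideal.mul_mem_right _ _ hx

lemma HFq_eq {k : Type} [Field k] {n m : ℕ} {I J : Ideal (PolyS k n m)} {μ : ℤ × ℤ} (hIJ : I ≤ J)
    (h : ∀ g ∈ J, g ∈ grad k n m μ → g ∈ I) : HFq k n m I μ = HFq k n m J μ := by
  let φ : (PolyS k n m ⧸ I) →ₗ[k] (PolyS k n m ⧸ J) := (Ideal.Quotient.factorₐ k hIJ).toLinearMap
  have hmap : (quotPiece k n m I μ).map φ = quotPiece k n m J μ := by
    unfold quotPiece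
    rw [← Submodule.map_comp]
    rfl
  have hinj : Function.Injective (φ.domRestrict (quotPiece k n m I μ)) := by
    rw [← LinearMap.ker_eq_bot, LinearMap.ker_eq_bot']
    rintro ⟨_, g, hg, rfl⟩ h0
    have h1 : (Ideal.Quotient.mk J g) = 0 := h0
    rw [Ideal.Quotient.eq_zero_iff_mem] at h1
    apply Subtype.ext
    exact Ideal.Quotient.eq_zero_iff_mem.2 (h g h1 hg)
  unfold HFq
  rw [← hmap]
  have := LinearMap.finrank_range_of_inj hinj
  rw [LinearMap.range_domRestrict] at this
  exact this.symm

end Final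


theorem stmt10 (k : Type) [Field k] (n m d e : ℕ)
    (f : Fin (n + m) → PolyS k n m) (I : Ideal (PolyS k n m))
    (hCI : IsCIPoints k n m d e f I)
    (μ : ℤ × ℤ) (hμ : μ ∉ GammaSet n m d e 1) :
    HFq k n m I μ = HFV k n m I μ := by
  exact HFq_eq (le_sat I _) fun g hg hgμ => sat_sub hCI hμ hg hgμ
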